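/- Suppose F satisfies (G1) and (G2) and the Perron–Frobenius operator P_σ of the base shift has spectral gap on d_θ-Lipschitz functions, and let μ₀ be the unique F-invariant probability measure in S^∞. Then there exist constants K > 0 and ξ ∈ (0,1) (the constants of the spectral gap of F^* on S^∞) such that for all functions g, f : Σ_A^+ × K → ℝ that are Lipschitz with respect to the metric d_θ + d, and all n ≥ 1, |∫ (g∘F^n)·f dμ₀ − ∫ g dμ₀ · ∫ f dμ₀| ≤ ‖fμ₀‖_{S^∞} · K · max{Lip(g), ‖g‖_∞} · ξ^n. -/

import Mathlib

open MeasureTheory ENNReal Set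

namespace RDS

/-- The one-sided subshift of finite type `Σ_A^+` determined by the 0-1 matrix `A`. -/
abbrev SigmaA (N : ℕ) (A : Fin N → Fin N → Bool) :=
  {x : ℕ → Fin N // ∀ i, A (x i) (x (i + 1)) = true}

variable {N : ℕ} {A : Fin N → Fin N → Bool}

/-- The shift map `σ` on `Σ_A^+`. -/
def shift (x : SigmaA N A) : SigmaA N A :=
  ⟨fun i => x.val (i + 1), fun i => x.prop (i + 1)⟩

/-- Aperiodicity of a 0-1 matrix: some power has all entries positive. -/
def Aperiodic (A : Fin N → Fin N → Bool) : Prop :=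
  ∃ k : ℕ, 0 < k ∧ ∀ i j,
    0 < ((Matrix.of fun a b => if A a b then (1 : ℕ) else 0) ^ k) i j

/-- The metric `d_θ(x,y) = Σ_i θ^i (1 - δ(x_i, y_i))` on `Σ_A^+`. -/
noncomputable def dTheta (θ : ℝ) (x y : SigmaA N A) : ℝ :=
  ∑' i : ℕ, θ ^ i * (if x.val i = y.val i then (0 : ℝ) else 1)

/-- Cylinder sets of `Σ_A^+`. -/
def cylinder (n : ℕ) (w : Fin (n + 1) → Fin N) : Set (SigmaA N A) :=
  {x | ∀ i : Fin (n + 1), x.val i = w i}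

/-- `m` is a Markov measure on `Σ_A^+` compatible with `A`: it is given on
cylinders by a stochastic matrix `P` (vanishing where `A` vanishes) and a
stationary probability vector `p`. -/
def IsMarkov (m : Measure (SigmaA N A)) : Prop :=
  ∃ (p : Fin N → ℝ≥0∞) (P : Fin N → Fin N → ℝ≥0∞),
    (∑ i, p i = 1) ∧ (∀ i, ∑ j, P i j = 1) ∧ (∀ j, ∑ i, p i * P i j = p j) ∧
    (∀ i j, A i j = false → P i j = 0) ∧
    ∀ (n : ℕ) (w : Fin (n + 1) → Fin N),
      m (cylinder n w) = p (w 0) * ∏ i : Fin n, P (w i.castSucc) (w i.succ)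

/-- `σ_i⁻¹(γ)`: the sequence `γ` with the symbol `i` prepended
(defined when `A i γ₀ = 1`), i.e. the inverse branch of the restriction `σ_i`
of `σ` to the cylinder `[i]`. -/
def prepend (i : Fin N) (x : SigmaA N A) (h : A i (x.val 0) = true) : SigmaA N A :=
  ⟨fun n => match n with
    | 0 => i
    | Nat.succ k => x.val k,
   fun j => match j with
    | 0 => h
    | Nat.succ k => x.prop k⟩

/-- `f` is `L`-Lipschitz with respect to the distance function `d`. -/
def LipWithD {X : Type*} (d : X → X → ℝ) (L : ℝ) (f : X → ℝ) : Prop :=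
  ∀ x y, |f x - f y| ≤ L * d x y

/-- `f` is Lipschitz with respect to the distance function `d`. -/
def LipD {X : Type*} (d : X → X → ℝ) (f : X → ℝ) : Prop :=
  ∃ L : ℝ, LipWithD d L f

/-- The best Lipschitz constant of `f` with respect to `d` (valued in `ℝ≥0∞`). -/
noncomputable def lipConst {X : Type*} (d : X → X → ℝ) (f : X → ℝ) : ℝ≥0∞ :=
  ⨆ (x : X) (y : X), ENNReal.ofReal (|f x - f y| / d x y)

/-- The sup norm of `f` (valued in `ℝ≥0∞`). -/
noncomputable def supNormE {X : Type*} (f : X → ℝ) : ℝ≥0∞ :=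
  ⨆ x : X, ENNReal.ofReal |f x|

/-- The norm `‖f‖_θ = ‖f‖_∞ + Lip_d(f)`. -/
noncomputable def thetaNorm {X : Type*} (d : X → X → ℝ) (f : X → ℝ) : ℝ≥0∞ :=
  supNormE f + lipConst d f

/-- The Perron-Frobenius operator duality characterizing `P_σ`:
`∫ P_σ(φ) · ψ dm = ∫ φ · (ψ ∘ σ) dm` for integrable `φ` and bounded measurable `ψ`. -/
def IsPerronFrobenius (m : Measure (SigmaA N A))
    (Pσ : (SigmaA N A → ℝ) → SigmaA N A → ℝ) : Prop :=
  ∀ φ ψ : SigmaA N A → ℝ, Integrable φ m → Measurable ψ → (∃ C, ∀ x, |ψ x| ≤ C) →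
    ∫ x, Pσ φ x * ψ x ∂m = ∫ x, φ x * ψ (shift x) ∂m

/-- Spectral gap for `P_σ` on `d_θ`-Lipschitz functions with constants `D`, `r`:
`‖P_σ^n φ‖_θ ≤ D r^n ‖φ‖_θ` for all `n` and all `d_θ`-Lipschitz `φ` with
`∫ φ dm = 0`. -/
def HasGap (m : Measure (SigmaA N A)) (θ : ℝ)
    (Pσ : (SigmaA N A → ℝ) → SigmaA N A → ℝ) (D r : ℝ) : Prop :=
  ∀ φ : SigmaA N A → ℝ, LipD (dTheta θ) φ → (∫ x, φ x ∂m) = 0 →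
    ∀ n : ℕ, thetaNorm (dTheta θ) (Pσ^[n] φ) ≤
      ENNReal.ofReal (D * r ^ n) * thetaNorm (dTheta θ) φ

/-- `Jm i` is the Jacobian `J_{m,σ_i}` of `m` with respect to the branch `σ_i`
(the restriction of `σ` to the cylinder `[i]`): `m (σ_i(E)) = ∫_E J_{m,σ_i} dm`
for every measurable `E` (intersected with `[i]`). -/
def IsJacobian (m : Measure (SigmaA N A)) (Jm : Fin N → SigmaA N A → ℝ) : Prop :=
  ∀ (i : Fin N) (E : Set (SigmaA N A)), MeasurableSet E →
    m {γ : SigmaA N A | ∃ h : A i (γ.val 0) = true, prepend i γ h ∈ E} =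
      ∫⁻ x in E ∩ {x : SigmaA N A | x.val 0 = i}, ENNReal.ofReal (Jm i x) ∂m

variable {K : Type*} [MetricSpace K] [MeasurableSpace K]

/-- The Wasserstein-Kantorovich like distance `W(ν₁,ν₂)`: the supremum of
`|∫ g dν₁ - ∫ g dν₂|` over `g : K → ℝ` with `Lip(g) ≤ 1` and `‖g‖_∞ ≤ 1`.
Applied with `ν₂ = 0` it gives the norm `‖ν₁‖_W`; applied to the two parts of a
decomposition of a signed measure it gives its `‖·‖_W` norm. -/
noncomputable def wDist (ν₁ ν₂ : Measure K) : ℝ≥0∞ :=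
  ⨆ g : {g : K → ℝ // LipschitzWith 1 g ∧ ∀ z, |g z| ≤ 1},
    ENNReal.ofReal |∫ z, g.val z ∂ν₁ - ∫ z, g.val z ∂ν₂|

/-- The skew product `F(x,z) = (σ(x), G(x,z))`. -/
def skew (G : SigmaA N A × K → K) (p : SigmaA N A × K) : SigmaA N A × K :=
  (shift p.1, G p)

/-- The transfer operator `F^* μ (E) = μ (F⁻¹ E)` acting on signed measures. -/
noncomputable def transfer (G : SigmaA N A × K → K)
    (μ : SignedMeasure (SigmaA N A × K)) : SignedMeasure (SigmaA N A × K) :=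
  μ.map (skew G)

/-- Condition (G1): uniform contraction of the vertical fibers with rate `α`. -/
def CondG1 (G : SigmaA N A × K → K) (α : ℝ) : Prop :=
  ∀ (x : SigmaA N A) (z₁ z₂ : K), dist (G (x, z₁)) (G (x, z₂)) ≤ α * dist z₁ z₂

/-- Condition (G2): `x ↦ G(x,z)` is `d_θ`-Lipschitz with constant `H`,
uniformly in `z`. -/
def CondG2 (θ : ℝ) (G : SigmaA N A × K → K) (H : ℝ) : Prop :=
  ∀ (z : K) (x y : SigmaA N A), dist (G (x, z)) (G (y, z)) ≤ H * dTheta θ x y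

/-- `T` is (the path `γ ↦ μ|_γ` of) a disintegration of `μ` along the vertical
fibers, over the reference measure `m`: `μ(E) = ∫ (μ|_γ)(E ∩ γ) dm(γ)`. -/
def IsDisint (m : Measure (SigmaA N A)) (μ : Measure (SigmaA N A × K))
    (T : SigmaA N A → Measure K) : Prop :=
  (∀ E : Set (SigmaA N A × K), MeasurableSet E →
      μ E = ∫⁻ γ, T γ {z | (γ, z) ∈ E} ∂m) ∧
  ∀ E : Set K, MeasurableSet E → Measurable fun γ => T γ E

/-- The (essential) `‖·‖_W`-Lipschitz constant of a path of measures,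
`|Γ|_θ^ω = ess sup_{γ₁ ≠ γ₂} ‖Γ(γ₁) - Γ(γ₂)‖_W / d_θ(γ₁,γ₂)`. -/
noncomputable def pathLip (m : Measure (SigmaA N A)) (θ : ℝ)
    (T : SigmaA N A → Measure K) : ℝ≥0∞ :=
  essSup (fun p : SigmaA N A × SigmaA N A =>
    wDist (T p.1) (T p.2) / ENNReal.ofReal (dTheta θ p.1 p.2)) (m.prod m)

/-- The Lipschitz constant `|μ|_θ` of a positive measure: the infimum over
disintegrations `ω` of `μ` of `|μ|_θ^ω`. -/
noncomputable def lipDisint (m : Measure (SigmaA N A)) (θ : ℝ)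
    (μ : Measure (SigmaA N A × K)) : ℝ≥0∞ :=
  ⨅ T : {T : SigmaA N A → Measure K // IsDisint m μ T}, pathLip m θ T.val

/-- The fiberwise transfer formula: the path representing `F^*μ` induced by the
path `T` representing `μ`, i.e.
`γ ↦ Σ_i 1_{σ([i])}(γ) (F_{iγ})_*(T(iγ)) / J_{m,σ_i}(iγ)`. -/
noncomputable def transferPath (G : SigmaA N A × K → K) (Jm : Fin N → SigmaA N A → ℝ)
    (T : SigmaA N A → Measure K) : SigmaA N A → Measure K :=
  fun γ => ∑ i : Fin N, if h : A i (γ.val 0) = true then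
      ENNReal.ofReal ((Jm i (prepend i γ h))⁻¹) •
        ((T (prepend i γ h)).map fun z => G (prepend i γ h, z))
    else 0

variable [BorelSpace K] [CompactSpace K] [Nonempty K]

/-- The fiberwise restriction `μ|_γ = π₂_* (φ₁(γ) μ_γ)` of a finite positive
measure `μ` on `Σ_A^+ × K`, where `({μ_γ}_γ, φ₁ m)` is the Rokhlin
disintegration of `μ` along the vertical fibers and `φ₁ = d(π₁_*μ)/dm`. -/
noncomputable def fiberR (m : Measure (SigmaA N A))
    (μ : Measure (SigmaA N A × K)) (γ : SigmaA N A) : Measure K := by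
  by_cases h : IsFiniteMeasure μ
  · haveI := h
    exact (μ.fst.rnDeriv m γ) • μ.condKernel γ
  · exact 0

/-- The norm `‖μ‖_∞ = ess sup_γ ‖μ|_γ‖_W` of a signed measure written as a
difference `μ = μ₁ - μ₂` of positive measures. -/
noncomputable def infNormPair (m : Measure (SigmaA N A))
    (μ₁ μ₂ : Measure (SigmaA N A × K)) : ℝ≥0∞ :=
  essSup (fun γ => wDist (fiberR m μ₁ γ) (fiberR m μ₂ γ)) m

/-- The marginal density `φ₁ = d(π₁_*μ)/dm` of the signed measure `μ = μ₁ - μ₂`. -/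
noncomputable def phiPair (m : Measure (SigmaA N A))
    (μ₁ μ₂ : Measure (SigmaA N A × K)) (γ : SigmaA N A) : ℝ :=
  (μ₁.fst.rnDeriv m γ).toReal - (μ₂.fst.rnDeriv m γ).toReal

/-- Membership in `AB`: both parts are finite with first marginal absolutely
continuous with respect to `m`. -/
def MemABPair (m : Measure (SigmaA N A)) (μ₁ μ₂ : Measure (SigmaA N A × K)) : Prop :=
  μ₁.fst ≪ m ∧ μ₂.fst ≪ m ∧ IsFiniteMeasure μ₁ ∧ IsFiniteMeasure μ₂

/-- Membership in `S^∞`: `μ ∈ AB`, `‖μ‖_∞ < ∞` and the marginal density `φ₁`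
has a `d_θ`-Lipschitz version. -/
def MemSPair (m : Measure (SigmaA N A)) (θ : ℝ)
    (μ₁ μ₂ : Measure (SigmaA N A × K)) : Prop :=
  MemABPair m μ₁ μ₂ ∧ infNormPair m μ₁ μ₂ < ⊤ ∧
    ∃ ψ : SigmaA N A → ℝ, ψ =ᵐ[m] phiPair m μ₁ μ₂ ∧ LipD (dTheta θ) ψ

/-- `‖φ₁‖_θ`, computed on the best version of the marginal density. -/
noncomputable def thetaNormMu (m : Measure (SigmaA N A)) (θ : ℝ)
    (μ₁ μ₂ : Measure (SigmaA N A × K)) : ℝ≥0∞ :=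
  ⨅ ψ : {ψ : SigmaA N A → ℝ // ψ =ᵐ[m] phiPair m μ₁ μ₂}, thetaNorm (dTheta θ) ψ.val

/-- The norm `‖μ‖_{S^∞} = ‖φ₁‖_θ + ‖μ‖_∞`. -/
noncomputable def sNormPair (m : Measure (SigmaA N A)) (θ : ℝ)
    (μ₁ μ₂ : Measure (SigmaA N A × K)) : ℝ≥0∞ :=
  thetaNormMu m θ μ₁ μ₂ + infNormPair m μ₁ μ₂

/-- Positive part of a signed measure. -/
noncomputable def jPos {X : Type*} [MeasurableSpace X] (μ : SignedMeasure X) : Measure X :=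
  μ.toJordanDecomposition.posPart

/-- Negative part of a signed measure. -/
noncomputable def jNeg {X : Type*} [MeasurableSpace X] (μ : SignedMeasure X) : Measure X :=
  μ.toJordanDecomposition.negPart

/-- Membership in `AB` for signed measures. -/
def MemAB (m : Measure (SigmaA N A)) (μ : SignedMeasure (SigmaA N A × K)) : Prop :=
  MemABPair m (jPos μ) (jNeg μ)

/-- Membership in `S^∞` for signed measures. -/
def MemS (m : Measure (SigmaA N A)) (θ : ℝ) (μ : SignedMeasure (SigmaA N A × K)) : Prop :=
  MemSPair m θ (jPos μ) (jNeg μ)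

/-- `‖μ‖_∞` for signed measures. -/
noncomputable def infNorm (m : Measure (SigmaA N A))
    (μ : SignedMeasure (SigmaA N A × K)) : ℝ≥0∞ :=
  infNormPair m (jPos μ) (jNeg μ)

/-- `‖μ‖_{S^∞}` for signed measures. -/
noncomputable def sNorm (m : Measure (SigmaA N A)) (θ : ℝ)
    (μ : SignedMeasure (SigmaA N A × K)) : ℝ≥0∞ :=
  sNormPair m θ (jPos μ) (jNeg μ)

/-- `‖φ₁‖_∞` of the marginal density of a signed measure. -/
noncomputable def phiSup (m : Measure (SigmaA N A))
    (μ : SignedMeasure (SigmaA N A × K)) : ℝ≥0∞ :=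
  essSup (fun γ => ENNReal.ofReal |phiPair m (jPos μ) (jNeg μ) γ|) m

/-!
A correlation `∫ (g ∘ F^n) f dμ₀` is the integral of `g` against `F^{*n}(fμ₀)`, so it suffices to
show that `F^{*n} ν → ν(1) μ₀` exponentially fast for `ν ∈ S^∞`, and that `fμ₀ ∈ S^∞`.

For the convergence, contraction of the fibers shows that `g ∘ F^n` is `O(α^n)`-close, in sup norm
and in fiberwise Lipschitz constant, to a function `h_n` of the base variable alone, and `‖ν‖_∞`
controls integrals of such differences. What is left is `∫ (ψ - ν(1) φ₀) h_n dm`, where `ψ` and `φ₀`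
are the marginal densities of `ν` and `μ₀`. Writing `h_{k+l} ≈ h_k ∘ σ^l` up to `O(α^k)`, the
spectral gap of `P_σ` on functions of mean zero bounds it by `O(α^k + r^l)`; balance `k` and `l`.

For the membership, only the Lipschitz regularity of the marginal density of `fμ₀` is at stake.
Since `μ₀` is invariant, this density is the `L¹`-limit of `P_σ^n (h_n φ₀)`, where now `h_n` comes
from `f`. The Lipschitz constant of `h_n` grows like `θ^{-n}`, which is exactly what the
Lasota–Yorke inequality compensates, so these functions are uniformly Lipschitz and so is the limit.
-/

open Filter Topology

section Lipschitz

variable {X : Type*} {d : X → X → ℝ} {f g : X → ℝ} {B B' L L' R S T : ℝ}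

lemma LipWithD.mono (hd : ∀ x y, 0 ≤ d x y) (hf : LipWithD d L f) (hL : L ≤ L') :
    LipWithD d L' f :=
  fun x y => (hf x y).trans (mul_le_mul_of_nonneg_right hL (hd x y))

lemma LipWithD.mul (hf : LipWithD d L f) (hg : LipWithD d L' g) (hS : ∀ x, |f x| ≤ S)
    (hT : ∀ x, |g x| ≤ T) : LipWithD d (S * L' + L * T) fun x => f x * g x := by
  intro x y
  have hS₀ : 0 ≤ S := (abs_nonneg _).trans (hS x)
  calc |f x * g x - f y * g y| = |f x * (g x - g y) + (f x - f y) * g y| := by ring_nf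
    _ ≤ |f x| * |g x - g y| + |f x - f y| * |g y| := by
        rw [← abs_mul, ← abs_mul]; exact abs_add_le _ _
    _ ≤ S * (L' * d x y) + L * d x y * T :=
        add_le_add (mul_le_mul (hS x) (hg x y) (abs_nonneg _) hS₀)
          (mul_le_mul (hf x y) (hT y) (abs_nonneg _) ((abs_nonneg _).trans (hf x y)))
    _ = (S * L' + L * T) * d x y := by ring

lemma LipWithD.continuous [TopologicalSpace X] (hd : ∀ y, Tendsto (d · y) (𝓝 y) (𝓝 0))
    (hf : LipWithD d L f) : Continuous f := by
  refine continuous_iff_continuousAt.2 fun y => tendsto_iff_dist_tendsto_zero.2 ?_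
  have hLd : Tendsto (fun x => L * d x y) (𝓝 y) (𝓝 0) := by simpa using (hd y).const_mul L
  exact squeeze_zero (fun _ => dist_nonneg) (fun x => hf x y) hLd

/-- `f` is bounded by `B` and `B`-Lipschitz with respect to `d`. Up to a factor `2` this says
`‖f‖_θ ≤ B`, without leaving the real numbers. -/
structure BddLip (d : X → X → ℝ) (B : ℝ) (f : X → ℝ) : Prop where
  nonneg : 0 ≤ B
  abs_le : ∀ x, |f x| ≤ B
  lip : LipWithD d B f

lemma BddLip.mono (hd : ∀ x y, 0 ≤ d x y) (hf : BddLip d B f) (hB : B ≤ B') : BddLip d B' f where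
  nonneg := hf.nonneg.trans hB
  abs_le x := (hf.abs_le x).trans hB
  lip := hf.lip.mono hd hB

lemma LipD.exists_bddLip (hd : ∀ x y, 0 ≤ d x y) (hR : ∀ x y, d x y ≤ R) (hf : LipD d f) :
    ∃ B, BddLip d B f := by
  obtain ⟨L, hL⟩ := hf
  rcases isEmpty_or_nonempty X with hX | ⟨⟨x₀⟩⟩
  · exact ⟨0, le_rfl, hX.elim, hX.elim⟩
  have hLR : 0 ≤ |L| * R := mul_nonneg (abs_nonneg L) ((hd x₀ x₀).trans (hR x₀ x₀))
  have hL' : LipWithD d |L| f := hL.mono hd (le_abs_self L)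
  refine ⟨|f x₀| + |L| * R + |L|, by positivity, fun x => ?_,
    hL'.mono hd (by linarith [abs_nonneg (f x₀)])⟩
  have hfx : |f x - f x₀| ≤ |L| * R :=
    (hL' x x₀).trans (mul_le_mul_of_nonneg_left (hR x x₀) (abs_nonneg L))
  linarith [abs_sub_abs_le_abs_sub (f x) (f x₀), abs_nonneg L]

lemma BddLip.sub_const_mul (hf : BddLip d B f) (hg : BddLip d B' g) (c : ℝ) :
    BddLip d (B + |c| * B') fun x => f x - c * g x where
  nonneg := add_nonneg hf.nonneg (mul_nonneg (abs_nonneg c) hg.nonneg)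
  abs_le x := by
    refine (abs_sub _ _).trans (add_le_add (hf.abs_le x) ?_)
    rw [abs_mul]
    exact mul_le_mul_of_nonneg_left (hg.abs_le x) (abs_nonneg c)
  lip x y := by
    calc |f x - c * g x - (f y - c * g y)| = |(f x - f y) - c * (g x - g y)| := by ring_nf
      _ ≤ |f x - f y| + |c| * |g x - g y| := by rw [← abs_mul]; exact abs_sub _ _
      _ ≤ B * d x y + |c| * (B' * d x y) :=
          add_le_add (hf.lip x y) (mul_le_mul_of_nonneg_left (hg.lip x y) (abs_nonneg c))
      _ = (B + |c| * B') * d x y := by ring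

lemma supNormE_le_ofReal (hf : ∀ x, |f x| ≤ S) : supNormE f ≤ ENNReal.ofReal S :=
  iSup_le fun x => ENNReal.ofReal_le_ofReal (hf x)

lemma thetaNorm_le_ofReal_add (hd : ∀ x y, 0 ≤ d x y) (hS : ∀ x, |f x| ≤ S) (hL : 0 ≤ L)
    (hf : LipWithD d L f) : thetaNorm d f ≤ ENNReal.ofReal S + ENNReal.ofReal L :=
  add_le_add (supNormE_le_ofReal hS) <| iSup₂_le fun x y =>
    ENNReal.ofReal_le_ofReal (div_le_of_le_mul₀ (hd x y) hL (hf x y))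

lemma BddLip.thetaNorm_le (hd : ∀ x y, 0 ≤ d x y) (hf : BddLip d B f) :
    thetaNorm d f ≤ ENNReal.ofReal (2 * B) := by
  rw [two_mul, ENNReal.ofReal_add hf.nonneg hf.nonneg]
  exact thetaNorm_le_ofReal_add hd hf.abs_le hf.nonneg hf.lip

lemma BddLip.of_thetaNorm_le (hd : ∀ x y, 0 ≤ d x y) (hd₀ : ∀ x y, d x y = 0 → x = y)
    (hB : 0 ≤ B) (hf : thetaNorm d f ≤ ENNReal.ofReal B) : BddLip d B f where
  nonneg := hB
  abs_le x := (ENNReal.ofReal_le_ofReal_iff hB).1 <|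
    (le_iSup (fun x => ENNReal.ofReal |f x|) x).trans (le_self_add.trans hf)
  lip x y := by
    rcases (hd x y).eq_or_lt with hxy | hxy
    · simp [hd₀ x y hxy.symm, mul_nonneg hB (hd y y)]
    have hquot : ENNReal.ofReal (|f x - f y| / d x y) ≤ ENNReal.ofReal B :=
      (le_iSup₂ (f := fun x y => ENNReal.ofReal (|f x - f y| / d x y)) x y).trans
        (le_add_self.trans hf)
    exact (div_le_iff₀ hxy).1 ((ENNReal.ofReal_le_ofReal_iff hB).1 hquot)

lemma BddLip.of_tendsto {ι : Type*} {l : Filter ι} [l.NeBot] {u : ι → X → ℝ}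
    (hu : ∀ i, BddLip d B (u i)) (hf : ∀ x, Tendsto (fun i => u i x) l (𝓝 (f x))) :
    BddLip d B f where
  nonneg := (hu (Classical.choice l.nonempty_of_neBot)).nonneg
  abs_le x := le_of_tendsto (hf x).abs (.of_forall fun i => (hu i).abs_le x)
  lip x y := le_of_tendsto ((hf x).sub (hf y)).abs (.of_forall fun i => (hu i).lip x y)

lemma exists_bddLip_ae_eq_of_tendsto_eLpNorm [MeasurableSpace X] {μ : Measure X} {u : ℕ → X → ℝ}
    (hu : ∀ n, BddLip d B (u n)) (hum : ∀ n, AEStronglyMeasurable (u n) μ)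
    (hf : AEStronglyMeasurable f μ)
    (hlim : Tendsto (fun n => eLpNorm (u n - f) 1 μ) atTop (𝓝 0)) :
    ∃ ψ, BddLip d B ψ ∧ ψ =ᵐ[μ] f := by
  obtain ⟨ns, -, hae⟩ :=
    (tendstoInMeasure_of_tendsto_eLpNorm one_ne_zero hum hf hlim).exists_seq_tendsto_ae
  -- A limit along an ultrafilter exists at every point, also where the subsequence diverges.
  have hpt : ∀ x, ∃ y, Tendsto (fun i => u (ns i) x) (hyperfilter ℕ) (𝓝 y) := fun x =>
    have hmem : ∀ i, u (ns i) x ∈ Set.Icc (-B) B := fun i => abs_le.1 ((hu (ns i)).abs_le x)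
    have ⟨y, _, hy⟩ := isCompact_Icc.ultrafilter_le_nhds
      ((hyperfilter ℕ).map fun i => u (ns i) x) (tendsto_principal.2 (.of_forall hmem))
    ⟨y, hy⟩
  choose ψ hψ using hpt
  refine ⟨ψ, .of_tendsto (fun i => hu (ns i)) hψ, ?_⟩
  filter_upwards [hae] with x hx
  exact tendsto_nhds_unique (hψ x) (hx.mono_left Nat.hyperfilter_le_atTop)

end Lipschitz

section Metric

variable {N : ℕ} {A : Fin N → Fin N → Bool} {K : Type*} [MetricSpace K] {θ L δ : ℝ}

lemma dTheta_term_nonneg (hθ : 0 ≤ θ) (x y : SigmaA N A) (i : ℕ) :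
    0 ≤ θ ^ i * if x.val i = y.val i then (0 : ℝ) else 1 :=
  mul_nonneg (pow_nonneg hθ i) (by split_ifs <;> norm_num)

lemma dTheta_term_le (hθ : 0 ≤ θ) (x y : SigmaA N A) (i : ℕ) :
    (θ ^ i * if x.val i = y.val i then (0 : ℝ) else 1) ≤ θ ^ i :=
  mul_le_of_le_one_right (pow_nonneg hθ i) (by split_ifs <;> norm_num)

lemma summable_dTheta_term (hθ : 0 ≤ θ) (hθ' : θ < 1) (x y : SigmaA N A) :
    Summable fun i : ℕ => θ ^ i * if x.val i = y.val i then (0 : ℝ) else 1 :=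
  .of_nonneg_of_le (dTheta_term_nonneg hθ x y) (dTheta_term_le hθ x y)
    (summable_geometric_of_lt_one hθ hθ')

lemma dTheta_nonneg (hθ : 0 ≤ θ) (x y : SigmaA N A) : 0 ≤ dTheta θ x y :=
  tsum_nonneg (dTheta_term_nonneg hθ x y)

lemma dTheta_self (x : SigmaA N A) : dTheta θ x x = 0 := by
  simp [dTheta]

lemma dTheta_le (hθ : 0 ≤ θ) (hθ' : θ < 1) (x y : SigmaA N A) : dTheta θ x y ≤ (1 - θ)⁻¹ := by
  rw [← tsum_geometric_of_lt_one hθ hθ']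
  exact (summable_dTheta_term hθ hθ' x y).tsum_le_tsum (dTheta_term_le hθ x y)
    (summable_geometric_of_lt_one hθ hθ')

lemma eq_of_dTheta_eq_zero (hθ : 0 < θ) (hθ' : θ < 1) (x y : SigmaA N A)
    (h : dTheta θ x y = 0) : x = y := by
  have hsum : HasSum _ (dTheta θ x y) := (summable_dTheta_term hθ.le hθ' x y).hasSum
  rw [h, hasSum_zero_iff_of_nonneg (dTheta_term_nonneg hθ.le x y)] at hsum
  refine Subtype.ext (funext fun i => by_contra fun hne => ?_)
  simpa [hne, hθ.ne'] using congrFun hsum i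

lemma tendsto_dTheta (hθ : 0 ≤ θ) (hθ' : θ < 1) (y : SigmaA N A) :
    Tendsto (dTheta θ · y) (𝓝 y) (𝓝 0) := by
  have hcont : Continuous fun x : SigmaA N A => dTheta θ x y := by
    refine continuous_tsum (u := fun i => θ ^ i) (fun i => ?_)
      (summable_geometric_of_lt_one hθ hθ') (fun i x => ?_)
    · have hcoord : Continuous fun x : SigmaA N A => x.val i :=
        (continuous_apply i).comp continuous_subtype_val
      exact continuous_const.mul <| (continuous_of_discreteTopology
        (f := fun a : Fin N => if a = y.val i then (0 : ℝ) else 1)).comp hcoord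
    · rw [Real.norm_of_nonneg (dTheta_term_nonneg hθ x y i)]
      exact dTheta_term_le hθ x y i
  simpa only [dTheta_self] using hcont.tendsto y

lemma mul_dTheta_shift_le (hθ : 0 ≤ θ) (hθ' : θ < 1) (x y : SigmaA N A) :
    θ * dTheta θ (shift x) (shift y) ≤ dTheta θ x y := by
  rw [dTheta, dTheta, (summable_dTheta_term hθ hθ' x y).tsum_eq_zero_add, ← tsum_mul_left]
  simp only [shift, pow_succ', mul_assoc]
  exact le_add_of_nonneg_left (dTheta_term_nonneg hθ x y 0)

lemma pow_mul_dTheta_shift_iterate_le (hθ : 0 ≤ θ) (hθ' : θ < 1) (n : ℕ) (x y : SigmaA N A) :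
    θ ^ n * dTheta θ (shift^[n] x) (shift^[n] y) ≤ dTheta θ x y := by
  induction n with
  | zero => simp
  | succ n ih =>
    rw [Function.iterate_succ_apply', Function.iterate_succ_apply', pow_succ, mul_assoc]
    exact (mul_le_mul_of_nonneg_left (mul_dTheta_shift_le hθ hθ' _ _) (pow_nonneg hθ n)).trans ih

/-- The metric `d_θ + d` on `Σ_A^+ × K`. -/
noncomputable def sumDist (θ : ℝ) (p q : SigmaA N A × K) : ℝ :=
  dTheta θ p.1 q.1 + dist p.2 q.2

lemma sumDist_nonneg (hθ : 0 ≤ θ) (p q : SigmaA N A × K) : 0 ≤ sumDist θ p q :=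
  add_nonneg (dTheta_nonneg hθ _ _) dist_nonneg

lemma sumDist_le (hθ : 0 ≤ θ) (hθ' : θ < 1) (hδ : ∀ z z' : K, dist z z' ≤ δ)
    (p q : SigmaA N A × K) : sumDist θ p q ≤ (1 - θ)⁻¹ + δ :=
  add_le_add (dTheta_le hθ hθ' _ _) (hδ _ _)

lemma tendsto_sumDist (hθ : 0 ≤ θ) (hθ' : θ < 1) (q : SigmaA N A × K) :
    Tendsto (sumDist θ · q) (𝓝 q) (𝓝 0) := by
  have hfst := (tendsto_dTheta hθ hθ' q.1).comp (continuous_fst.tendsto q)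
  have hsnd : Tendsto (fun p : SigmaA N A × K => dist p.2 q.2) (𝓝 q) (𝓝 0) :=
    tendsto_iff_dist_tendsto_zero.1 (continuous_snd.tendsto q)
  exact add_zero (0 : ℝ) ▸ hfst.add hsnd

lemma LipWithD.measurable_of_dTheta (hθ : 0 ≤ θ) (hθ' : θ < 1) {φ : SigmaA N A → ℝ}
    (hφ : LipWithD (dTheta θ) L φ) : Measurable φ :=
  (hφ.continuous (tendsto_dTheta hθ hθ')).measurable

lemma LipWithD.measurable_of_sumDist [CompactSpace K] [MeasurableSpace K] [BorelSpace K]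
    (hθ : 0 ≤ θ) (hθ' : θ < 1) {f : SigmaA N A × K → ℝ} (hf : LipWithD (sumDist θ) L f) :
    Measurable f :=
  (hf.continuous (tendsto_sumDist hθ hθ')).measurable

lemma LipWithD.fiber {f : SigmaA N A × K → ℝ} (hf : LipWithD (sumDist θ) L f)
    (x : SigmaA N A) : LipWithD dist L fun z => f (x, z) := fun z z' => by
  simpa [sumDist, dTheta_self] using hf (x, z) (x, z')

lemma measurable_shift : Measurable (shift : SigmaA N A → SigmaA N A) := by
  refine Measurable.subtype_mk (measurable_pi_lambda _ fun i => ?_)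
  exact (measurable_pi_apply (i + 1)).comp measurable_subtype_coe

end Metric

section Integral

variable {Ω : Type*} [MeasurableSpace Ω] {μ ν : Measure Ω} {f u : Ω → ℝ} {C : ℝ} {c : ℝ≥0∞}

lemma integrable_of_abs_le [IsFiniteMeasure μ] (hf : Measurable f) (hC : ∀ x, |f x| ≤ C) :
    Integrable f μ :=
  .of_bound hf.aestronglyMeasurable C (.of_forall hC)

lemma abs_integral_le_of_ae_abs_le [IsProbabilityMeasure μ] (hC : ∀ᵐ x ∂μ, |f x| ≤ C) :
    |∫ x, f x ∂μ| ≤ C := by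
  simpa [Measure.real] using norm_integral_le_of_norm_le_const (f := f) (μ := μ) hC

lemma integral_comp_iterate {T : Ω → Ω} (hT : MeasurePreserving T μ μ) (hu : Measurable u) (n : ℕ) :
    ∫ x, u (T^[n] x) ∂μ = ∫ x, u x ∂μ := by
  have hTn := hT.iterate n
  conv_rhs => rw [← hTn.map_eq]
  exact (integral_map hTn.measurable.aemeasurable hu.aestronglyMeasurable).symm

lemma eLpNorm_one_le_of_forall_integral_mul_le (hf : Measurable f) (hfμ : Integrable f μ)
    (hC : ∀ w : Ω → ℝ, Measurable w → (∀ x, |w x| ≤ 1) → ∫ x, f x * w x ∂μ ≤ C) :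
    eLpNorm f 1 μ ≤ ENNReal.ofReal C := by
  rw [eLpNorm_one_eq_lintegral_enorm, ← ofReal_integral_norm_eq_lintegral_enorm hfμ]
  refine ENNReal.ofReal_le_ofReal ?_
  have hnorm : ∀ x, ‖f x‖ = f x * if 0 ≤ f x then 1 else -1 := fun x => by
    split_ifs with hx
    · rw [Real.norm_of_nonneg hx, mul_one]
    · rw [Real.norm_of_nonpos (not_le.1 hx).le, mul_neg_one]
  simp only [hnorm]
  exact hC _ (.ite (measurableSet_le measurable_const hf) measurable_const measurable_const)
    fun x => by split_ifs <;> simp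

lemma rnDeriv_le_of_le_smul [SigmaFinite μ] [SigmaFinite ν] (h : ν ≤ c • μ) :
    ν.rnDeriv μ ≤ᵐ[μ] fun _ => c := by
  refine ae_le_of_forall_setLIntegral_le_of_sigmaFinite (ν.measurable_rnDeriv μ) fun s _ _ => ?_
  rw [setLIntegral_const]
  exact (Measure.setLIntegral_rnDeriv_le s).trans (h s)

lemma le_smul_of_rnDeriv_le [ν.HaveLebesgueDecomposition μ] (hac : ν ≪ μ)
    (h : ν.rnDeriv μ ≤ᵐ[μ] fun _ => c) : ν ≤ c • μ := by
  rw [← Measure.withDensity_rnDeriv_eq ν μ hac, ← withDensity_const]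
  exact withDensity_mono h

/-- The positive part `f⁺μ` of the signed measure `fμ`, which is encoded as the pair
`(f⁺μ, (-f)⁺μ)`. -/
noncomputable def posWithDensity (μ : Measure Ω) (f : Ω → ℝ) : Measure Ω :=
  μ.withDensity fun x => ENNReal.ofReal (f x)

lemma posWithDensity_le_smul (hC : ∀ x, f x ≤ C) : posWithDensity μ f ≤ ENNReal.ofReal C • μ := by
  rw [posWithDensity, ← withDensity_const]
  exact withDensity_mono (.of_forall fun x => ENNReal.ofReal_le_ofReal (hC x))

lemma isFiniteMeasure_posWithDensity [IsFiniteMeasure μ] (hC : ∀ x, f x ≤ C) :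
    IsFiniteMeasure (posWithDensity μ f) :=
  have : IsFiniteMeasure (ENNReal.ofReal C • μ) := μ.smul_finite ENNReal.ofReal_ne_top
  isFiniteMeasure_of_le _ (posWithDensity_le_smul hC)

lemma integral_posWithDensity_sub (hf : Measurable f) (hfu : Integrable (fun x => u x * f x) μ) :
    ∫ x, u x ∂posWithDensity μ f - ∫ x, u x ∂posWithDensity μ (fun x => -f x) =
      ∫ x, u x * f x ∂μ := by
  have hpos : ∀ x, (ENNReal.ofReal (f x)).toReal • u x =
      {x | 0 ≤ f x}.indicator (fun x => u x * f x) x := fun x => by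
    by_cases hx : 0 ≤ f x
    · simp [hx, mul_comm]
    · simp [hx, ENNReal.ofReal_of_nonpos (not_le.1 hx).le]
  have hneg : ∀ x, (ENNReal.ofReal (-f x)).toReal • u x =
      -{x | f x < 0}.indicator (fun x => u x * f x) x := fun x => by
    by_cases hx : f x < 0
    · simp [hx, hx.le, mul_comm]
    · simp [hx, ENNReal.ofReal_of_nonpos (neg_nonpos.2 (not_lt.1 hx))]
  have hcompl : {x | f x < 0} = {x | 0 ≤ f x}ᶜ := by ext; simp
  have hmeas : MeasurableSet {x | 0 ≤ f x} := measurableSet_le measurable_const hf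
  rw [posWithDensity, posWithDensity,
    integral_withDensity_eq_integral_toReal_smul hf.ennreal_ofReal (by simp),
    integral_withDensity_eq_integral_toReal_smul hf.fun_neg.ennreal_ofReal (by simp)]
  simp only [hpos, hneg, integral_neg, sub_neg_eq_add, hcompl]
  rw [integral_indicator hmeas, integral_indicator hmeas.compl, integral_add_compl hmeas hfu]

end Integral

section Fiber

variable {N : ℕ} {A : Fin N → Fin N → Bool} {K : Type*} [MeasurableSpace K]
  {m : Measure (SigmaA N A)} {μ μ₁ μ₂ : Measure (SigmaA N A × K)} {θ B C : ℝ}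

lemma integral_rnDeriv_fst_mul [SigmaFinite m] [IsFiniteMeasure μ] (hac : μ.fst ≪ m)
    {u : SigmaA N A → ℝ} (hu : Measurable u) :
    ∫ x, (μ.fst.rnDeriv m x).toReal * u x ∂m = ∫ p, u p.1 ∂μ := by
  simpa only [smul_eq_mul, Measure.fst, integral_map measurable_fst.aemeasurable
    hu.aestronglyMeasurable] using integral_rnDeriv_smul hac (f := u)

lemma measurable_phiPair : Measurable (phiPair m μ₁ μ₂) :=
  (Measure.measurable_rnDeriv _ _).ennreal_toReal.sub
    (Measure.measurable_rnDeriv _ _).ennreal_toReal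

lemma MemABPair.integrable_phiPair [SigmaFinite m] (h : MemABPair m μ₁ μ₂) :
    Integrable (phiPair m μ₁ μ₂) m := by
  obtain ⟨-, -, _, _⟩ := h
  exact Measure.integrable_toReal_rnDeriv.sub Measure.integrable_toReal_rnDeriv

lemma MemABPair.integral_phiPair_mul [SigmaFinite m] (h : MemABPair m μ₁ μ₂)
    {u : SigmaA N A → ℝ} (hu : Measurable u) (hC : ∀ x, |u x| ≤ C) :
    ∫ x, phiPair m μ₁ μ₂ x * u x ∂m = ∫ p, u p.1 ∂μ₁ - ∫ p, u p.1 ∂μ₂ := by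
  obtain ⟨hac₁, hac₂, hfin₁, hfin₂⟩ := h
  have hint : ∀ {μ : Measure (SigmaA N A × K)} [IsFiniteMeasure μ], μ.fst ≪ m →
      Integrable (fun x => (μ.fst.rnDeriv m x).toReal * u x) m := fun hac =>
    (integrable_rnDeriv_smul_iff hac).2 (integrable_of_abs_le hu hC)
  rw [← integral_rnDeriv_fst_mul hac₁ hu, ← integral_rnDeriv_fst_mul hac₂ hu,
    ← integral_sub (hint hac₁) (hint hac₂)]
  simp only [phiPair, sub_mul]

lemma MemABPair.integral_version_mul [SigmaFinite m] (h : MemABPair m μ₁ μ₂)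
    {ψ u : SigmaA N A → ℝ} (hψ : ψ =ᵐ[m] phiPair m μ₁ μ₂) (hu : Measurable u)
    (hC : ∀ x, |u x| ≤ C) :
    ∫ x, ψ x * u x ∂m = ∫ p, u p.1 ∂μ₁ - ∫ p, u p.1 ∂μ₂ := by
  rw [← h.integral_phiPair_mul hu hC]
  exact integral_congr_ae (hψ.mul .rfl)

lemma MemABPair.integral_version [SigmaFinite m] (h : MemABPair m μ₁ μ₂)
    {ψ : SigmaA N A → ℝ} (hψ : ψ =ᵐ[m] phiPair m μ₁ μ₂) :
    ∫ x, ψ x ∂m = μ₁.real univ - μ₂.real univ := by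
  simpa using h.integral_version_mul hψ (u := fun _ => 1) (C := 1) measurable_const (by simp)

lemma fst_le_smul_of_version [SigmaFinite m] [IsFiniteMeasure μ] (hac : μ.fst ≪ m)
    {φ : SigmaA N A → ℝ} (hφ : φ =ᵐ[m] phiPair m μ 0) (hB : ∀ x, φ x ≤ B) :
    μ.fst ≤ ENNReal.ofReal B • m := by
  refine le_smul_of_rnDeriv_le hac ?_
  have hzero : (0 : Measure (SigmaA N A × K)).fst.rnDeriv m =ᵐ[m] 0 := by
    rw [Measure.fst_zero]; exact Measure.rnDeriv_zero m
  filter_upwards [hφ, hzero, μ.fst.rnDeriv_lt_top m] with x hx hx₀ hfin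
  have hφx : φ x = (μ.fst.rnDeriv m x).toReal := by
    rw [hx, phiPair, hx₀, Pi.zero_apply, ENNReal.toReal_zero, sub_zero]
  rw [← ENNReal.ofReal_toReal hfin.ne, ← hφx]
  exact ENNReal.ofReal_le_ofReal (hB x)

variable [MetricSpace K]

/-- `V` is measurable, bounded by `C` and `C`-Lipschitz along every vertical fiber. These are the
observables against which `‖·‖_∞` controls a signed measure. -/
structure FiberBddLip (C : ℝ) (V : SigmaA N A × K → ℝ) : Prop where
  measurable : Measurable V
  nonneg : 0 ≤ C
  abs_le : ∀ p, |V p| ≤ C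
  lip : ∀ x, LipWithD dist C fun z => V (x, z)

lemma wDist_le_add (ν₁ ν₂ : Measure K) : wDist ν₁ ν₂ ≤ ν₁ univ + ν₂ univ := by
  rcases eq_or_ne (ν₁ univ) ⊤ with h₁ | h₁
  · simp [h₁]
  rcases eq_or_ne (ν₂ univ) ⊤ with h₂ | h₂
  · simp [h₂]
  refine iSup_le fun g => ENNReal.ofReal_le_of_le_toReal ?_
  have habs : ∀ ν : Measure K, ν univ ≠ ⊤ → |∫ z, g.val z ∂ν| ≤ (ν univ).toReal := fun ν hν => by
    have : IsFiniteMeasure ν := ⟨hν.lt_top⟩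
    simpa [Measure.real] using
      norm_integral_le_of_norm_le_const (μ := ν) (f := g.val) (C := 1) (.of_forall g.2.2)
  rw [ENNReal.toReal_add h₁ h₂]
  exact (abs_sub _ _).trans (add_le_add (habs ν₁ h₁) (habs ν₂ h₂))

lemma abs_integral_sub_le_wDist {ν₁ ν₂ : Measure K} (h : wDist ν₁ ν₂ ≠ ⊤) {u : K → ℝ}
    (hC : 0 ≤ C) (hu : ∀ z, |u z| ≤ C) (hL : LipWithD dist C u) :
    |∫ z, u z ∂ν₁ - ∫ z, u z ∂ν₂| ≤ C * (wDist ν₁ ν₂).toReal := by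
  rcases hC.eq_or_lt with rfl | hC
  · have hu₀ : u = 0 := funext fun z => abs_nonpos_iff.1 (hu z)
    simp [hu₀]
  have hlip : LipschitzWith 1 fun z => C⁻¹ * u z := .of_dist_le_mul fun z z' => by
    rw [Real.dist_eq, ← mul_sub, abs_mul, abs_of_pos (inv_pos.2 hC), NNReal.coe_one, one_mul,
      inv_mul_le_iff₀ hC]
    exact hL z z'
  have hbdd : ∀ z, |C⁻¹ * u z| ≤ 1 := fun z => by
    rw [abs_mul, abs_of_pos (inv_pos.2 hC), inv_mul_le_iff₀ hC, mul_one]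
    exact hu z
  have htest := (ENNReal.ofReal_le_iff_le_toReal h).1 <|
    le_iSup (fun g : {g : K → ℝ // LipschitzWith 1 g ∧ ∀ z, |g z| ≤ 1} =>
      ENNReal.ofReal |∫ z, g.val z ∂ν₁ - ∫ z, g.val z ∂ν₂|) ⟨_, hlip, hbdd⟩
  simpa only [integral_const_mul, ← mul_sub, abs_mul, abs_of_pos (inv_pos.2 hC),
    inv_mul_le_iff₀ hC] using htest

variable [BorelSpace K] [CompactSpace K] [Nonempty K]

lemma fiberR_univ [IsFiniteMeasure μ] (x : SigmaA N A) :
    fiberR m μ x univ = μ.fst.rnDeriv m x := by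
  simp [fiberR, *]

lemma integral_fiberR [IsFiniteMeasure μ] (u : SigmaA N A × K → ℝ) (x : SigmaA N A) :
    ∫ z, u (x, z) ∂fiberR m μ x =
      (μ.fst.rnDeriv m x).toReal • ∫ z, u (x, z) ∂μ.condKernel x := by
  rw [fiberR, dif_pos ‹_›, integral_smul_measure]

lemma integrable_integral_fiberR [SigmaFinite m] [IsFiniteMeasure μ] (hac : μ.fst ≪ m)
    {u : SigmaA N A × K → ℝ} (hu : Integrable u μ) :
    Integrable (fun x => ∫ z, u (x, z) ∂fiberR m μ x) m := by
  rw [← μ.disintegrate μ.condKernel] at hu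
  simp only [integral_fiberR, integrable_rnDeriv_smul_iff hac]
  exact Integrable.integral_compProd (κ := ProbabilityTheory.Kernel.const Unit μ.fst)
    (η := ProbabilityTheory.Kernel.prodMkLeft Unit μ.condKernel) (a := ()) hu

lemma integral_integral_fiberR [SigmaFinite m] [IsFiniteMeasure μ] (hac : μ.fst ≪ m)
    {u : SigmaA N A × K → ℝ} (hu : Integrable u μ) :
    ∫ x, ∫ z, u (x, z) ∂fiberR m μ x ∂m = ∫ p, u p ∂μ := by
  simp only [integral_fiberR, integral_rnDeriv_smul hac]
  rw [← μ.disintegrate μ.condKernel] at hu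
  rw [← Measure.integral_compProd hu, Measure.disintegrate]

lemma MemABPair.abs_integral_sub_le [IsProbabilityMeasure m] (h : MemABPair m μ₁ μ₂)
    (hfin : infNormPair m μ₁ μ₂ < ⊤) {V : SigmaA N A × K → ℝ} (hV : FiberBddLip C V) :
    |∫ p, V p ∂μ₁ - ∫ p, V p ∂μ₂| ≤ C * (infNormPair m μ₁ μ₂).toReal := by
  obtain ⟨hac₁, hac₂, _, _⟩ := h
  have hV₁ : Integrable V μ₁ := integrable_of_abs_le hV.measurable hV.abs_le
  have hV₂ : Integrable V μ₂ := integrable_of_abs_le hV.measurable hV.abs_le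
  rw [← integral_integral_fiberR hac₁ hV₁, ← integral_integral_fiberR hac₂ hV₂,
    ← integral_sub (integrable_integral_fiberR hac₁ hV₁) (integrable_integral_fiberR hac₂ hV₂)]
  refine abs_integral_le_of_ae_abs_le ?_
  filter_upwards [_root_.ae_le_essSup (f := fun γ => wDist (fiberR m μ₁ γ) (fiberR m μ₂ γ))]
    with x hx
  refine (abs_integral_sub_le_wDist (hx.trans_lt hfin).ne hV.nonneg (fun z => hV.abs_le _)
    (hV.lip x)).trans ?_
  exact mul_le_mul_of_nonneg_left (ENNReal.toReal_mono hfin.ne hx) hV.nonneg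

lemma infNormPair_le_add [IsFiniteMeasure μ₁] [IsFiniteMeasure μ₂] [SigmaFinite m] {c₁ c₂ : ℝ≥0∞}
    (h₁ : μ₁.fst ≤ c₁ • m) (h₂ : μ₂.fst ≤ c₂ • m) : infNormPair m μ₁ μ₂ ≤ c₁ + c₂ := by
  refine essSup_le_of_ae_le _ ?_
  filter_upwards [rnDeriv_le_of_le_smul h₁, rnDeriv_le_of_le_smul h₂] with x hx₁ hx₂
  refine (wDist_le_add _ _).trans ?_
  rw [fiberR_univ, fiberR_univ]
  exact add_le_add hx₁ hx₂

lemma MemSPair.le_mul_toReal_sNormPair (hθ : 0 < θ) (hθ' : θ < 1) (h : MemSPair m θ μ₁ μ₂)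
    {a Y : ℝ} (ha : ∀ ψ b, ψ =ᵐ[m] phiPair m μ₁ μ₂ → BddLip (dTheta θ) b ψ →
      a ≤ Y * (b + (infNormPair m μ₁ μ₂).toReal)) :
    a ≤ Y * (sNormPair m θ μ₁ μ₂).toReal := by
  obtain ⟨-, hfin, ψ₀, hψ₀, hLip⟩ := h
  have htop : thetaNormMu m θ μ₁ μ₂ ≠ ⊤ := by
    obtain ⟨B, hB⟩ := hLip.exists_bddLip (dTheta_nonneg hθ.le) (dTheta_le hθ.le hθ')
    exact ((iInf_le _ ⟨ψ₀, hψ₀⟩).trans_lt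
      ((hB.thetaNorm_le (dTheta_nonneg hθ.le)).trans_lt ENNReal.ofReal_lt_top)).ne
  have hgt : ∀ b > (thetaNormMu m θ μ₁ μ₂).toReal,
      a ≤ Y * (b + (infNormPair m μ₁ μ₂).toReal) := fun b hb => by
    obtain ⟨⟨ψ, hψ⟩, hψb⟩ := iInf_lt_iff.1 ((ENNReal.lt_ofReal_iff_toReal_lt htop).2 hb)
    exact ha ψ b hψ (.of_thetaNorm_le (dTheta_nonneg hθ.le) (eq_of_dTheta_eq_zero hθ hθ')
      (ENNReal.toReal_nonneg.trans hb.le) hψb.le)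
  rw [sNormPair, ENNReal.toReal_add htop hfin.ne]
  have hcont : Continuous fun b => Y * (b + (infNormPair m μ₁ μ₂).toReal) := by fun_prop
  exact ge_of_tendsto (hcont.tendsto _ |>.mono_left nhdsWithin_le_nhds)
    (eventually_nhdsWithin_of_forall hgt : ∀ᶠ b in 𝓝[>] _, _)

end Fiber

section PerronFrobenius

variable {N : ℕ} {A : Fin N → Fin N → Bool} {m : Measure (SigmaA N A)}
  {Pσ : (SigmaA N A → ℝ) → SigmaA N A → ℝ} {φ ψ : SigmaA N A → ℝ} {θ B C₂ D L M S r : ℝ}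

/-- The Lasota–Yorke inequality `‖P_σ^n φ‖_θ ≤ θ^n ‖φ‖_θ + C₂ ‖φ‖_∞` for `d_θ`-Lipschitz `φ`. -/
def LasotaYorke (θ : ℝ) (Pσ : (SigmaA N A → ℝ) → SigmaA N A → ℝ) (C₂ : ℝ) : Prop :=
  ∀ φ : SigmaA N A → ℝ, LipD (dTheta θ) φ → ∀ n : ℕ, 1 ≤ n →
    thetaNorm (dTheta θ) (Pσ^[n] φ) ≤
      ENNReal.ofReal (θ ^ n) * thetaNorm (dTheta θ) φ + ENNReal.ofReal C₂ * supNormE φ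

lemma BddLip.integrable [IsFiniteMeasure m] (hθ : 0 ≤ θ) (hθ' : θ < 1)
    (hφ : BddLip (dTheta θ) B φ) : Integrable φ m :=
  integrable_of_abs_le (hφ.lip.measurable_of_dTheta hθ hθ') hφ.abs_le

lemma LasotaYorke.bddLip_iterate (hθ : 0 < θ) (hθ' : θ < 1) (hC₂ : 0 ≤ C₂)
    (hLY : LasotaYorke θ Pσ C₂) (hS₀ : 0 ≤ S) (hS : ∀ x, |φ x| ≤ S) (hL : 0 ≤ L)
    (hφ : LipWithD (dTheta θ) L φ) {n : ℕ} (hn : 1 ≤ n) :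
    BddLip (dTheta θ) (θ ^ n * (S + L) + C₂ * S) (Pσ^[n] φ) := by
  refine .of_thetaNorm_le (dTheta_nonneg hθ.le) (eq_of_dTheta_eq_zero hθ hθ') (by positivity) ?_
  have hnorm := thetaNorm_le_ofReal_add (dTheta_nonneg hθ.le) hS hL hφ
  calc thetaNorm (dTheta θ) (Pσ^[n] φ)
      ≤ ENNReal.ofReal (θ ^ n) * thetaNorm (dTheta θ) φ + ENNReal.ofReal C₂ * supNormE φ :=
        hLY φ ⟨L, hφ⟩ n hn
    _ ≤ ENNReal.ofReal (θ ^ n) * (ENNReal.ofReal S + ENNReal.ofReal L) +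
          ENNReal.ofReal C₂ * ENNReal.ofReal S := by
        gcongr
        exact supNormE_le_ofReal hS
    _ = ENNReal.ofReal (θ ^ n * (S + L) + C₂ * S) := by
        rw [← ENNReal.ofReal_add hS₀ hL, ← ENNReal.ofReal_mul (by positivity),
          ← ENNReal.ofReal_mul hC₂, ← ENNReal.ofReal_add (by positivity) (by positivity)]

lemma LasotaYorke.integrable_iterate [IsFiniteMeasure m] (hθ : 0 < θ) (hθ' : θ < 1)
    (hC₂ : 0 ≤ C₂) (hLY : LasotaYorke θ Pσ C₂) (hφ : LipD (dTheta θ) φ) (n : ℕ) :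
    Integrable (Pσ^[n] φ) m := by
  obtain ⟨B, hB⟩ := hφ.exists_bddLip (dTheta_nonneg hθ.le) (dTheta_le hθ.le hθ')
  rcases n.eq_zero_or_pos with rfl | hn
  · exact hB.integrable hθ.le hθ'
  · exact (hLY.bddLip_iterate hθ hθ' hC₂ hB.nonneg hB.abs_le hB.nonneg hB.lip hn).integrable
      hθ.le hθ'

lemma IsPerronFrobenius.integral_iterate_mul (hPF : IsPerronFrobenius m Pσ)
    (hφ : ∀ k, Integrable (Pσ^[k] φ) m) (hψ : Measurable ψ) (hM : ∀ x, |ψ x| ≤ M) (n : ℕ) :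
    ∫ x, Pσ^[n] φ x * ψ x ∂m = ∫ x, φ x * ψ (shift^[n] x) ∂m := by
  induction n generalizing ψ with
  | zero => rfl
  | succ n ih =>
    simp only [Function.iterate_succ_apply']
    rw [hPF _ _ (hφ n) hψ ⟨M, hM⟩]
    exact ih (hψ.comp measurable_shift) fun x => hM (shift x)

lemma HasGap.bddLip_iterate (hθ : 0 < θ) (hθ' : θ < 1) (hD : 0 ≤ D) (hr : 0 ≤ r)
    (hgap : HasGap m θ Pσ D r) (hφ : BddLip (dTheta θ) B φ) (hφ₀ : ∫ x, φ x ∂m = 0) (n : ℕ) :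
    BddLip (dTheta θ) (D * r ^ n * (2 * B)) (Pσ^[n] φ) := by
  have hB := hφ.nonneg
  refine .of_thetaNorm_le (dTheta_nonneg hθ.le) (eq_of_dTheta_eq_zero hθ hθ') (by positivity) ?_
  rw [ENNReal.ofReal_mul (by positivity)]
  exact (hgap φ ⟨B, hφ.lip⟩ hφ₀ n).trans
    (mul_le_mul_right (hφ.thetaNorm_le (dTheta_nonneg hθ.le)) _)

lemma HasGap.abs_integral_mul_shift_iterate_le [IsProbabilityMeasure m] (hθ : 0 < θ) (hθ' : θ < 1)
    (hD : 0 ≤ D) (hr : 0 ≤ r) (hgap : HasGap m θ Pσ D r) (hPF : IsPerronFrobenius m Pσ)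
    (hφ : BddLip (dTheta θ) B φ) (hφ₀ : ∫ x, φ x ∂m = 0) (hψ : Measurable ψ)
    (hM : ∀ x, |ψ x| ≤ M) (n : ℕ) :
    |∫ x, φ x * ψ (shift^[n] x) ∂m| ≤ D * r ^ n * (2 * B) * M := by
  have hiter := hgap.bddLip_iterate hθ hθ' hD hr hφ hφ₀
  rw [← hPF.integral_iterate_mul (fun k => (hiter k).integrable hθ.le hθ') hψ hM n]
  refine abs_integral_le_of_ae_abs_le (.of_forall fun x => ?_)
  rw [abs_mul]
  exact mul_le_mul ((hiter n).abs_le x) (hM x) (abs_nonneg _) (hiter n).nonneg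

end PerronFrobenius

section SkewProduct

variable {N : ℕ} {A : Fin N → Fin N → Bool} {K : Type*} {G : SigmaA N A × K → K}
  {g : SigmaA N A × K → ℝ} {θ α H L δ : ℝ}

lemma fst_skew_iterate (G : SigmaA N A × K → K) (n : ℕ) (p : SigmaA N A × K) :
    ((skew G)^[n] p).1 = shift^[n] p.1 := by
  induction n with
  | zero => rfl
  | succ n ih => rw [Function.iterate_succ_apply', Function.iterate_succ_apply', skew, ih]

lemma snd_skew_iterate_succ (G : SigmaA N A × K → K) (n : ℕ) (p : SigmaA N A × K) :
    ((skew G)^[n + 1] p).2 = G (shift^[n] p.1, ((skew G)^[n] p).2) := by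
  rw [Function.iterate_succ_apply', skew, ← fst_skew_iterate]

/-- The function `x ↦ g (F^n (x, z₀))` on the base, which samples `g ∘ F^n` along the
section `z = z₀`. -/
def fiberSample (G : SigmaA N A × K → K) (z₀ : K) (g : SigmaA N A × K → ℝ) (n : ℕ)
    (x : SigmaA N A) : ℝ :=
  g ((skew G)^[n] (x, z₀))

lemma measurable_fiberSample [MeasurableSpace K] (hG : Measurable (skew G)) (z₀ : K)
    (hg : Measurable g) (n : ℕ) : Measurable (fiberSample G z₀ g n) :=
  hg.comp ((hG.iterate n).comp measurable_prodMk_right)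

variable [MetricSpace K]

lemma CondG1.dist_skew_iterate_le (hα : 0 ≤ α) (hG1 : CondG1 G α) (n : ℕ) (x : SigmaA N A)
    (z z' : K) :
    dist ((skew G)^[n] (x, z)).2 ((skew G)^[n] (x, z')).2 ≤ α ^ n * dist z z' := by
  induction n with
  | zero => simp
  | succ n ih =>
    rw [snd_skew_iterate_succ, snd_skew_iterate_succ, pow_succ', mul_assoc]
    exact (hG1 _ _ _).trans (mul_le_mul_of_nonneg_left ih hα)

lemma CondG1.abs_comp_skew_iterate_sub_le (hα : 0 ≤ α) (hG1 : CondG1 G α) (hL₀ : 0 ≤ L)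
    (hL : ∀ x, LipWithD dist L fun z => g (x, z)) (n : ℕ) (x : SigmaA N A) (z z' : K) :
    |g ((skew G)^[n] (x, z)) - g ((skew G)^[n] (x, z'))| ≤ L * (α ^ n * dist z z') := by
  have hfiber := hL (shift^[n] x) ((skew G)^[n] (x, z)).2 ((skew G)^[n] (x, z')).2
  simp only [← fst_skew_iterate G n (x, z)] at hfiber
  nth_rewrite 2 [fst_skew_iterate] at hfiber
  simp only [← fst_skew_iterate G n (x, z')] at hfiber
  exact hfiber.trans (mul_le_mul_of_nonneg_left (hG1.dist_skew_iterate_le hα n x z z') hL₀)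

lemma CondG1.abs_sub_fiberSample_le (hα : 0 ≤ α) (hG1 : CondG1 G α) (hL₀ : 0 ≤ L)
    (hL : ∀ x, LipWithD dist L fun z => g (x, z)) (hδ : ∀ z z' : K, dist z z' ≤ δ) (z₀ : K)
    (n : ℕ) (p : SigmaA N A × K) :
    |g ((skew G)^[n] p) - fiberSample G z₀ g n p.1| ≤ L * δ * α ^ n := by
  calc |g ((skew G)^[n] p) - fiberSample G z₀ g n p.1| ≤ L * (α ^ n * dist p.2 z₀) :=
        hG1.abs_comp_skew_iterate_sub_le hα hL₀ hL n p.1 p.2 z₀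
    _ ≤ L * (α ^ n * δ) := by gcongr; exact hδ _ _
    _ = L * δ * α ^ n := by ring

lemma CondG1.abs_fiberSample_add_sub_le (hα : 0 ≤ α) (hG1 : CondG1 G α) (hL₀ : 0 ≤ L)
    (hL : ∀ x, LipWithD dist L fun z => g (x, z)) (hδ : ∀ z z' : K, dist z z' ≤ δ) (z₀ : K)
    (k l : ℕ) (x : SigmaA N A) :
    |fiberSample G z₀ g (k + l) x - fiberSample G z₀ g k (shift^[l] x)| ≤ L * δ * α ^ k := by
  rw [fiberSample, Function.iterate_add_apply, ← fst_skew_iterate G l (x, z₀)]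
  exact hG1.abs_sub_fiberSample_le hα hL₀ hL hδ z₀ k _

lemma CondG2.pow_mul_dist_skew_iterate_le (hθ : 0 ≤ θ) (hθ' : θ < 1) (hα : α ≤ 1)
    (hG1 : CondG1 G α) (hG2 : CondG2 θ G H) (n : ℕ) (x y : SigmaA N A) (z : K) :
    θ ^ n * dist ((skew G)^[n] (x, z)).2 ((skew G)^[n] (y, z)).2 ≤
      |H| * (1 - θ)⁻¹ * dTheta θ x y := by
  have hθ₁ : 0 < 1 - θ := sub_pos.2 hθ'
  have hxy := dTheta_nonneg hθ x y
  induction n with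
  | zero =>
    simp only [Function.iterate_zero, id, pow_zero, dist_self, mul_zero]
    positivity
  | succ n ih =>
    rw [snd_skew_iterate_succ, snd_skew_iterate_succ]
    set a := ((skew G)^[n] (x, z)).2
    set b := ((skew G)^[n] (y, z)).2
    have hfiber : dist (G (shift^[n] x, a)) (G (shift^[n] x, b)) ≤ dist a b :=
      (hG1 _ _ _).trans (mul_le_of_le_one_left dist_nonneg hα)
    have hbase : dist (G (shift^[n] x, b)) (G (shift^[n] y, b)) ≤
        |H| * dTheta θ (shift^[n] x) (shift^[n] y) :=
      (hG2 _ _ _).trans (mul_le_mul_of_nonneg_right (le_abs_self H) (dTheta_nonneg hθ _ _))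
    have hshift : 0 ≤ |H| * (θ ^ n * dTheta θ (shift^[n] x) (shift^[n] y)) :=
      mul_nonneg (abs_nonneg H) (mul_nonneg (pow_nonneg hθ n) (dTheta_nonneg hθ _ _))
    calc θ ^ (n + 1) * dist (G (shift^[n] x, a)) (G (shift^[n] y, b))
        ≤ θ ^ (n + 1) * (dist a b + |H| * dTheta θ (shift^[n] x) (shift^[n] y)) := by
          gcongr
          exact (dist_triangle _ _ _).trans (add_le_add hfiber hbase)
      _ = θ * (θ ^ n * dist a b) +
          θ * (|H| * (θ ^ n * dTheta θ (shift^[n] x) (shift^[n] y))) := by ring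
      _ ≤ θ * (|H| * (1 - θ)⁻¹ * dTheta θ x y) + 1 * (|H| * dTheta θ x y) := by
          gcongr
          exact pow_mul_dTheta_shift_iterate_le hθ hθ' n x y
      _ = |H| * (1 - θ)⁻¹ * dTheta θ x y := by field_simp; ring

lemma CondG2.lipWithD_fiberSample (hθ : 0 < θ) (hθ' : θ < 1) (hα : α ≤ 1) (hG1 : CondG1 G α)
    (hG2 : CondG2 θ G H) (hL₀ : 0 ≤ L) (hg : LipWithD (sumDist θ) L g) (z₀ : K) (n : ℕ) :
    LipWithD (dTheta θ) (L * (1 + |H| * (1 - θ)⁻¹) / θ ^ n) (fiberSample G z₀ g n) := by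
  intro x y
  rw [div_mul_eq_mul_div, le_div_iff₀' (pow_pos hθ n)]
  have hsum := hg ((skew G)^[n] (x, z₀)) ((skew G)^[n] (y, z₀))
  rw [sumDist, fst_skew_iterate, fst_skew_iterate] at hsum
  have hfst := pow_mul_dTheta_shift_iterate_le hθ.le hθ' n x y
  have hsnd := hG2.pow_mul_dist_skew_iterate_le hθ.le hθ' hα hG1 n x y z₀
  calc θ ^ n * |fiberSample G z₀ g n x - fiberSample G z₀ g n y|
      ≤ θ ^ n * (L * (dTheta θ (shift^[n] x) (shift^[n] y) +
          dist ((skew G)^[n] (x, z₀)).2 ((skew G)^[n] (y, z₀)).2)) := by gcongr; exact hsum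
    _ = L * (θ ^ n * dTheta θ (shift^[n] x) (shift^[n] y) +
          θ ^ n * dist ((skew G)^[n] (x, z₀)).2 ((skew G)^[n] (y, z₀)).2) := by ring
    _ ≤ L * (dTheta θ x y + |H| * (1 - θ)⁻¹ * dTheta θ x y) := by gcongr
    _ = L * (1 + |H| * (1 - θ)⁻¹) * dTheta θ x y := by ring

lemma CondG2.lipWithD_fiberSample_mul {S B₀ : ℝ} {f : SigmaA N A × K → ℝ}
    {φ₀ : SigmaA N A → ℝ} (hθ : 0 < θ) (hθ' : θ < 1) (hα : α ≤ 1) (hG1 : CondG1 G α)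
    (hG2 : CondG2 θ G H) (hf : BddLip (sumDist θ) S f) (hφ₀ : BddLip (dTheta θ) B₀ φ₀) (z₀ : K)
    (n : ℕ) :
    LipWithD (dTheta θ) (S * B₀ + S * (1 + |H| * (1 - θ)⁻¹) / θ ^ n * B₀)
      fun x => fiberSample G z₀ f n x * φ₀ x :=
  (hG2.lipWithD_fiberSample hθ hθ' hα hG1 hf.nonneg hf.lip z₀ n).mul hφ₀.lip
    (fun _ => hf.abs_le _) hφ₀.abs_le

end SkewProduct

section Equilibrium

variable {N : ℕ} {A : Fin N → Fin N → Bool} {K : Type*} [MetricSpace K] [MeasurableSpace K]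
  {m : Measure (SigmaA N A)} {μ₀ μ₁ μ₂ : Measure (SigmaA N A × K)} {G : SigmaA N A × K → K}
  {Pσ : (SigmaA N A → ℝ) → SigmaA N A → ℝ} {φ₀ χ ψ : SigmaA N A → ℝ} {g : SigmaA N A × K → ℝ}
  {z₀ : K} {θ α δ b B₀ D E M r : ℝ}

lemma FiberBddLip.sub_fiberSample (hg : FiberBddLip M g) (hG : Measurable (skew G)) (hα : 0 ≤ α)
    (hG1 : CondG1 G α) (hδ₁ : 1 ≤ δ) (hδ : ∀ z z' : K, dist z z' ≤ δ) (z₀ : K) (n : ℕ) :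
    FiberBddLip (M * δ * α ^ n) fun p => g ((skew G)^[n] p) - fiberSample G z₀ g n p.1 where
  measurable := (hg.measurable.comp (hG.iterate n)).sub
    ((measurable_fiberSample hG z₀ hg.measurable n).comp measurable_fst)
  nonneg := mul_nonneg (mul_nonneg hg.nonneg (zero_le_one.trans hδ₁)) (pow_nonneg hα n)
  abs_le := hG1.abs_sub_fiberSample_le hα hg.nonneg hg.lip hδ z₀ n
  lip x z z' := by
    have hM := hg.nonneg
    rw [sub_sub_sub_cancel_right]
    calc |g ((skew G)^[n] (x, z)) - g ((skew G)^[n] (x, z'))| ≤ M * (α ^ n * dist z z') :=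
          hG1.abs_comp_skew_iterate_sub_le hα hM hg.lip n x z z'
      _ = M * 1 * α ^ n * dist z z' := by ring
      _ ≤ M * δ * α ^ n * dist z z' := by gcongr

lemma HasGap.abs_integral_mul_fiberSample_le [IsProbabilityMeasure m] (hθ : 0 < θ) (hθ' : θ < 1)
    (hG : Measurable (skew G)) (hα : 0 ≤ α) (hG1 : CondG1 G α) (hδ : ∀ z z' : K, dist z z' ≤ δ)
    (hPF : IsPerronFrobenius m Pσ) (hD : 0 ≤ D) (hr : 0 ≤ r) (hgap : HasGap m θ Pσ D r)
    (hg : FiberBddLip M g) (hχ : BddLip (dTheta θ) b χ) (hχ₀ : ∫ x, χ x ∂m = 0) (k l : ℕ) :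
    |∫ x, χ x * fiberSample G z₀ g (k + l) x ∂m| ≤
      b * (M * (δ * α ^ k + 2 * D * r ^ l)) := by
  have hmeas := measurable_fiberSample hG z₀ hg.measurable
  have hM : ∀ n x, |fiberSample G z₀ g n x| ≤ M := fun n x => hg.abs_le _
  have hshift : Measurable fun x => fiberSample G z₀ g k (shift^[l] x) :=
    (hmeas k).comp (measurable_shift.iterate l)
  have hint : ∀ {u : SigmaA N A → ℝ}, Measurable u → (∀ x, |u x| ≤ M) →
      Integrable (fun x => χ x * u x) m := fun hu huM =>
    (hχ.integrable hθ.le hθ').mul_bdd hu.aestronglyMeasurable (.of_forall huM)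
  have hfiber : |∫ x, χ x * (fiberSample G z₀ g (k + l) x -
      fiberSample G z₀ g k (shift^[l] x)) ∂m| ≤ b * (M * δ * α ^ k) := by
    refine abs_integral_le_of_ae_abs_le (.of_forall fun x => ?_)
    rw [abs_mul]
    exact mul_le_mul (hχ.abs_le x)
      (hG1.abs_fiberSample_add_sub_le hα hg.nonneg hg.lip hδ z₀ k l x) (abs_nonneg _) hχ.nonneg
  have hbase := hgap.abs_integral_mul_shift_iterate_le hθ hθ' hD hr hPF hχ hχ₀ (hmeas k) (hM k) l
  simp only [mul_sub] at hfiber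
  rw [integral_sub (hint (hmeas _) (hM _)) (hint hshift fun x => hM k _)] at hfiber
  calc |∫ x, χ x * fiberSample G z₀ g (k + l) x ∂m|
      ≤ b * (M * δ * α ^ k) + D * r ^ l * (2 * b) * M :=
        (sub_le_iff_le_add.1 (abs_sub_abs_le_abs_sub _ _)).trans <| by linarith
    _ = b * (M * (δ * α ^ k + 2 * D * r ^ l)) := by ring

variable [BorelSpace K] [CompactSpace K] [Nonempty K]

lemma MemABPair.abs_integral_iterate_sub_le [IsProbabilityMeasure m] (h : MemABPair m μ₁ μ₂)
    (hfin : infNormPair m μ₁ μ₂ < ⊤) (hG : Measurable (skew G)) (hα : 0 ≤ α) (hG1 : CondG1 G α)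
    (hδ₁ : 1 ≤ δ) (hδ : ∀ z z' : K, dist z z' ≤ δ) (hg : FiberBddLip M g)
    (hψ : ψ =ᵐ[m] phiPair m μ₁ μ₂) (z₀ : K) (n : ℕ) :
    |∫ p, g ((skew G)^[n] p) ∂μ₁ - ∫ p, g ((skew G)^[n] p) ∂μ₂ -
        ∫ x, ψ x * fiberSample G z₀ g n x ∂m| ≤
      M * δ * α ^ n * (infNormPair m μ₁ μ₂).toReal := by
  have hmeas := measurable_fiberSample hG z₀ hg.measurable n
  have hM : ∀ x, |fiberSample G z₀ g n x| ≤ M := fun x => hg.abs_le _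
  have hsplit : ∀ {μ : Measure (SigmaA N A × K)} [IsFiniteMeasure μ],
      ∫ p, (g ((skew G)^[n] p) - fiberSample G z₀ g n p.1) ∂μ =
        ∫ p, g ((skew G)^[n] p) ∂μ - ∫ p, fiberSample G z₀ g n p.1 ∂μ := fun {μ} _ =>
    integral_sub (integrable_of_abs_le (hg.measurable.comp (hG.iterate n)) fun p => hg.abs_le _)
      (integrable_of_abs_le (hmeas.comp measurable_fst) fun p => hM p.1)
  have hfiber := h.abs_integral_sub_le hfin (hg.sub_fiberSample hG hα hG1 hδ₁ hδ z₀ n)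
  obtain ⟨-, -, _, _⟩ := id h
  rwa [hsplit, hsplit, sub_sub_sub_comm, ← h.integral_version_mul hψ hmeas hM] at hfiber

lemma MemABPair.abs_integral_iterate_sub_mul_integral_le [IsProbabilityMeasure m] (hθ : 0 < θ)
    (hθ' : θ < 1) (hG : Measurable (skew G)) (hα : 0 ≤ α) (hG1 : CondG1 G α) (hδ₁ : 1 ≤ δ)
    (hδ : ∀ z z' : K, dist z z' ≤ δ) [IsProbabilityMeasure μ₀]
    (hinv : MeasurePreserving (skew G) μ₀ μ₀) (h : MemABPair m μ₁ μ₂)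
    (hfin : infNormPair m μ₁ μ₂ < ⊤) (hψ : ψ =ᵐ[m] phiPair m μ₁ μ₂)
    (hb : BddLip (dTheta θ) b ψ) (h₀ : MemABPair m μ₀ 0) (hfin₀ : infNormPair m μ₀ 0 < ⊤)
    (hφ₀ : φ₀ =ᵐ[m] phiPair m μ₀ 0) (hB₀ : BddLip (dTheta θ) B₀ φ₀) (hg : FiberBddLip M g) {n : ℕ}
    (hE₀ : 0 ≤ E) (hE : ∀ χ b, BddLip (dTheta θ) b χ → ∫ x, χ x ∂m = 0 →
      |∫ x, χ x * fiberSample G z₀ g n x ∂m| ≤ b * E) :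
    |∫ p, g ((skew G)^[n] p) ∂μ₁ - ∫ p, g ((skew G)^[n] p) ∂μ₂ -
        (μ₁.real univ - μ₂.real univ) * ∫ p, g p ∂μ₀| ≤
      M * δ * α ^ n * ((infNormPair m μ₁ μ₂).toReal + b * (infNormPair m μ₀ 0).toReal) +
        b * (1 + B₀) * E := by
  set c := μ₁.real univ - μ₂.real univ
  have hψc : ∫ x, ψ x ∂m = c := h.integral_version hψ
  have hφ₁ : ∫ x, φ₀ x ∂m = 1 := by simpa using h₀.integral_version hφ₀
  have hcb : |c| ≤ b := hψc ▸ abs_integral_le_of_ae_abs_le (.of_forall hb.abs_le)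
  have hψint := hb.integrable (m := m) hθ.le hθ'
  have hφint := hB₀.integrable (m := m) hθ.le hθ'
  have hmean : ∫ x, (ψ x - c * φ₀ x) ∂m = 0 := by
    rw [integral_sub hψint (hφint.const_mul c), integral_const_mul, hψc, hφ₁, mul_one, sub_self]
  have hbase := hE _ _ (hb.sub_const_mul hB₀ c) hmean
  have hfiber := h.abs_integral_iterate_sub_le hfin hG hα hG1 hδ₁ hδ hg hψ z₀ n
  have hfiber₀ := h₀.abs_integral_iterate_sub_le hfin₀ hG hα hG1 hδ₁ hδ hg hφ₀ z₀ n
  have hmeas := measurable_fiberSample hG z₀ hg.measurable n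
  have hint : ∀ {φ : SigmaA N A → ℝ}, Integrable φ m →
      Integrable (fun x => φ x * fiberSample G z₀ g n x) m := fun hφ =>
    hφ.mul_bdd hmeas.aestronglyMeasurable (.of_forall fun x => hg.abs_le _)
  simp only [sub_mul, mul_assoc] at hbase
  rw [integral_sub (hint hψint) ((hint hφint).const_mul c), integral_const_mul] at hbase
  rw [integral_zero_measure, sub_zero, integral_comp_iterate hinv hg.measurable] at hfiber₀
  set I := ∫ p, g ((skew G)^[n] p) ∂μ₁ - ∫ p, g ((skew G)^[n] p) ∂μ₂
  set Jψ := ∫ x, ψ x * fiberSample G z₀ g n x ∂m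
  set J₀ := ∫ x, φ₀ x * fiberSample G z₀ g n x ∂m
  set w := (infNormPair m μ₁ μ₂).toReal
  set w₀ := (infNormPair m μ₀ 0).toReal
  calc |I - c * ∫ p, g p ∂μ₀| = |(I - Jψ) - c * (∫ p, g p ∂μ₀ - J₀) + (Jψ - c * J₀)| := by
        ring_nf
    _ ≤ |I - Jψ| + |c| * |∫ p, g p ∂μ₀ - J₀| + |Jψ - c * J₀| := by
        rw [← abs_mul]; exact (abs_add_le _ _).trans (add_le_add_left (abs_sub _ _) _)
    _ ≤ M * δ * α ^ n * w + b * (M * δ * α ^ n * w₀) + (b + b * B₀) * E := by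
        have hB := hB₀.nonneg
        exact add_le_add (add_le_add hfiber (mul_le_mul hcb hfiber₀ (abs_nonneg _) hb.nonneg))
          (hbase.trans (by gcongr))
    _ = M * δ * α ^ n * (w + b * w₀) + b * (1 + B₀) * E := by ring

lemma pow_le_div_of_sq_le {a ξ : ℝ} (ha : 0 ≤ a) (haξ : a ≤ ξ ^ 2) (hξ : 0 < ξ) (hξ' : ξ ≤ 1)
    {j n : ℕ} (hn : n ≤ 2 * j + 1) : a ^ j ≤ ξ ^ n / ξ := by
  rw [le_div_iff₀ hξ]
  calc a ^ j * ξ ≤ (ξ ^ 2) ^ j * ξ := by gcongr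
    _ = ξ ^ (2 * j + 1) := by rw [← pow_mul, pow_succ]
    _ ≤ ξ ^ n := pow_le_pow_of_le_one hξ.le hξ' hn

lemma exists_rate_forall_split (hα : 0 ≤ α) (hα' : α < 1) (hr : 0 < r) (hr' : r < 1) :
    ∃ ξ : ℝ, 0 < ξ ∧ ξ < 1 ∧
      ∀ n : ℕ, ∃ k l, n = k + l ∧ α ^ k ≤ ξ ^ n / ξ ∧ r ^ l ≤ ξ ^ n / ξ := by
  have hξ : 0 < √(max α r) := Real.sqrt_pos.2 (lt_max_of_lt_right hr)
  have hξ' : √(max α r) < 1 := (Real.sqrt_lt' one_pos).2 (by simp [hα', hr'])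
  have hξsq : √(max α r) ^ 2 = max α r := Real.sq_sqrt (hα.trans (le_max_left _ _))
  exact ⟨_, hξ, hξ', fun n => ⟨n / 2, n - n / 2, by omega,
    pow_le_div_of_sq_le hα ((le_max_left α r).trans_eq hξsq.symm) hξ hξ'.le (by omega),
    pow_le_div_of_sq_le hr.le ((le_max_right α r).trans_eq hξsq.symm) hξ hξ'.le (by omega)⟩⟩

theorem exists_exponential_convergence_to_equilibrium [IsProbabilityMeasure m] (hθ : 0 < θ)
    (hθ' : θ < 1) (hG : Measurable (skew G)) (hα : 0 ≤ α) (hα' : α < 1) (hG1 : CondG1 G α)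
    (hPF : IsPerronFrobenius m Pσ) (hD : 0 ≤ D) (hr : 0 < r) (hr' : r < 1)
    (hgap : HasGap m θ Pσ D r) [IsProbabilityMeasure μ₀]
    (hinv : MeasurePreserving (skew G) μ₀ μ₀) (h₀ : MemSPair m θ μ₀ 0) :
    ∃ K₀ ξ : ℝ, 0 < K₀ ∧ 0 < ξ ∧ ξ < 1 ∧
      ∀ μ₁ μ₂, MemSPair m θ μ₁ μ₂ → ∀ M g, FiberBddLip M g → ∀ n : ℕ,
        |∫ p, g ((skew G)^[n] p) ∂μ₁ - ∫ p, g ((skew G)^[n] p) ∂μ₂ -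
            (μ₁.real univ - μ₂.real univ) * ∫ p, g p ∂μ₀| ≤
          K₀ * M * ξ ^ n * (sNormPair m θ μ₁ μ₂).toReal := by
  obtain ⟨hAB₀, hfin₀, φ₀, hφ₀, hLip₀⟩ := h₀
  obtain ⟨B₀, hB₀⟩ := hLip₀.exists_bddLip (dTheta_nonneg hθ.le) (dTheta_le hθ.le hθ')
  set δ := max 1 (Metric.diam (univ : Set K))
  have hδ₁ : 1 ≤ δ := le_max_left _ _
  have hδ : ∀ z z' : K, dist z z' ≤ δ := fun z z' =>
    (Metric.dist_le_diam_of_mem isCompact_univ.isBounded trivial trivial).trans (le_max_right _ _)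
  obtain ⟨ξ, hξ, hξ', hrate⟩ := exists_rate_forall_split hα hα' hr hr'
  set w₀ := (infNormPair m μ₀ 0).toReal
  have hB := hB₀.nonneg
  refine ⟨(δ * (1 + w₀) + (1 + B₀) * (δ + 2 * D)) / ξ, ξ, by positivity, hξ, hξ',
    fun μ₁ μ₂ hμ M g hg n => hμ.le_mul_toReal_sNormPair hθ hθ' fun ψ b hψ hb => ?_⟩
  obtain ⟨k, l, rfl, hαk, hrl⟩ := hrate n
  have hαkl : α ^ (k + l) ≤ ξ ^ (k + l) / ξ :=
    (pow_le_pow_of_le_one hα hα'.le (k.le_add_right l)).trans hαk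
  have hM := hg.nonneg
  have hb₀ := hb.nonneg
  set w := (infNormPair m μ₁ μ₂).toReal
  obtain ⟨z₀⟩ := ‹Nonempty K›
  have hbase : ∀ χ b, BddLip (dTheta θ) b χ → ∫ x, χ x ∂m = 0 →
      |∫ x, χ x * fiberSample G z₀ g (k + l) x ∂m| ≤ b * (M * (δ * α ^ k + 2 * D * r ^ l)) :=
    fun χ b hχ hχ₀ => hgap.abs_integral_mul_fiberSample_le hθ hθ' hG hα hG1 hδ hPF hD hr.le hg hχ
      hχ₀ k l
  refine (hμ.1.abs_integral_iterate_sub_mul_integral_le hθ hθ' hG hα hG1 hδ₁ hδ hinv hμ.2.1 hψ hb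
    hAB₀ hfin₀ hφ₀ hB₀ hg (by positivity) hbase).trans ?_
  set q := ξ ^ (k + l) / ξ
  calc M * δ * α ^ (k + l) * (w + b * w₀) + b * (1 + B₀) * (M * (δ * α ^ k + 2 * D * r ^ l))
      ≤ M * δ * q * (w + b * w₀) + b * (1 + B₀) * (M * (δ * q + 2 * D * q)) := by gcongr
    _ = M * q * (δ * w + b * (δ * w₀ + (1 + B₀) * (δ + 2 * D))) := by ring
    _ ≤ M * q * ((δ * (1 + w₀) + (1 + B₀) * (δ + 2 * D)) * (b + w)) := by
        have hcross : 0 ≤ δ * b + (δ * w₀ + (1 + B₀) * (δ + 2 * D)) * w := by positivity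
        gcongr
        linarith
    _ = (δ * (1 + w₀) + (1 + B₀) * (δ + 2 * D)) / ξ * M * ξ ^ (k + l) * (b + w) := by ring

end Equilibrium

section SampledDensity

variable {N : ℕ} {A : Fin N → Fin N → Bool} {K : Type*} {G : SigmaA N A × K → K}
  {Pσ : (SigmaA N A → ℝ) → SigmaA N A → ℝ} {φ₀ : SigmaA N A → ℝ} {f : SigmaA N A × K → ℝ}
  {θ α B₀ C₂ H S : ℝ}

/-- The density of `(σ^n)_* (h_n φ₀ m)`, where `h_n` samples `f ∘ F^n` along `z = z₀`. When `φ₀`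
is the marginal density of an invariant measure `μ₀`, these functions approximate the marginal
density of `fμ₀`. -/
def sampledDensity (Pσ : (SigmaA N A → ℝ) → SigmaA N A → ℝ) (G : SigmaA N A × K → K) (z₀ : K)
    (f : SigmaA N A × K → ℝ) (φ₀ : SigmaA N A → ℝ) (n : ℕ) : SigmaA N A → ℝ :=
  Pσ^[n] fun x => fiberSample G z₀ f n x * φ₀ x

variable [MetricSpace K]

lemma LasotaYorke.bddLip_sampledDensity (hθ : 0 < θ) (hθ' : θ < 1) (hα : α ≤ 1)
    (hG1 : CondG1 G α) (hG2 : CondG2 θ G H) (hC₂ : 0 ≤ C₂) (hLY : LasotaYorke θ Pσ C₂)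
    (hf : BddLip (sumDist θ) S f) (hφ₀ : BddLip (dTheta θ) B₀ φ₀) (z₀ : K) {n : ℕ} (hn : 1 ≤ n) :
    BddLip (dTheta θ) (S * B₀ * (3 + |H| * (1 - θ)⁻¹ + C₂)) (sampledDensity Pσ G z₀ f φ₀ n) := by
  have hS := hf.nonneg
  have hB₀ := hφ₀.nonneg
  have hθ₁ : 0 < 1 - θ := sub_pos.2 hθ'
  have hsup : ∀ x, |fiberSample G z₀ f n x * φ₀ x| ≤ S * B₀ := fun x => by
    rw [abs_mul]
    exact mul_le_mul (hf.abs_le _) (hφ₀.abs_le x) (abs_nonneg _) hS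
  refine (hLY.bddLip_iterate hθ hθ' hC₂ (by positivity) hsup (by positivity)
    (hG2.lipWithD_fiberSample_mul hθ hθ' hα hG1 hf hφ₀ z₀ n) hn).mono (dTheta_nonneg hθ.le) ?_
  -- The factor `θ ^ n` absorbs the growth of the Lipschitz constants of the samples.
  calc θ ^ n * (S * B₀ + (S * B₀ + S * (1 + |H| * (1 - θ)⁻¹) / θ ^ n * B₀)) + C₂ * (S * B₀)
      = θ ^ n * (2 * (S * B₀)) + S * B₀ * (1 + |H| * (1 - θ)⁻¹ + C₂) := by field_simp; ring
    _ ≤ 1 * (2 * (S * B₀)) + S * B₀ * (1 + |H| * (1 - θ)⁻¹ + C₂) := by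
        gcongr
        exact pow_le_one₀ hθ.le hθ'.le
    _ = S * B₀ * (3 + |H| * (1 - θ)⁻¹ + C₂) := by ring

end SampledDensity

section Density

variable {N : ℕ} {A : Fin N → Fin N → Bool} {K : Type*} [MeasurableSpace K]
  {m : Measure (SigmaA N A)} {μ μ₀ : Measure (SigmaA N A × K)} {G : SigmaA N A × K → K}
  {Pσ : (SigmaA N A → ℝ) → SigmaA N A → ℝ} {φ₀ w : SigmaA N A → ℝ} {f : SigmaA N A × K → ℝ}
  {z₀ : K} {θ α δ B₀ C₂ H S : ℝ}

lemma memABPair_posWithDensity [IsFiniteMeasure μ] (hac : μ.fst ≪ m) (hS : ∀ p, |f p| ≤ S) :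
    MemABPair m (posWithDensity μ f) (posWithDensity μ fun p => -f p) :=
  have hfst : ∀ u : SigmaA N A × K → ℝ, (posWithDensity μ u).fst ≪ m := fun _ =>
    ((withDensity_absolutelyContinuous _ _).map measurable_fst).trans hac
  ⟨hfst f, hfst _, isFiniteMeasure_posWithDensity fun p => (abs_le'.1 (hS p)).1,
    isFiniteMeasure_posWithDensity fun p => (abs_le'.1 (hS p)).2⟩

lemma integral_phiPair_posWithDensity_mul [SigmaFinite m] [IsFiniteMeasure μ] (hac : μ.fst ≪ m)
    (hf : Measurable f) (hS : ∀ p, |f p| ≤ S) (hw : Measurable w) (hw₁ : ∀ x, |w x| ≤ 1) :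
    ∫ x, phiPair m (posWithDensity μ f) (posWithDensity μ fun p => -f p) x * w x ∂m =
      ∫ p, w p.1 * f p ∂μ := by
  rw [(memABPair_posWithDensity hac hS).integral_phiPair_mul hw hw₁]
  exact integral_posWithDensity_sub hf ((integrable_of_abs_le hf hS).bdd_mul
    (hw.comp measurable_fst).aestronglyMeasurable (.of_forall fun p => hw₁ p.1))

variable [MetricSpace K]

lemma abs_integral_mul_fiberSample_sub_le (hG : Measurable (skew G)) (hα : 0 ≤ α)
    (hG1 : CondG1 G α) (hδ : ∀ z z' : K, dist z z' ≤ δ) [IsProbabilityMeasure μ₀]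
    (hinv : MeasurePreserving (skew G) μ₀ μ₀) (hf : FiberBddLip S f) (z₀ : K) (hw : Measurable w)
    (hw₁ : ∀ x, |w x| ≤ 1) (n : ℕ) :
    |∫ p, w (shift^[n] p.1) * fiberSample G z₀ f n p.1 ∂μ₀ - ∫ p, w p.1 * f p ∂μ₀| ≤
      S * δ * α ^ n := by
  have hwn : Measurable fun p : SigmaA N A × K => w (shift^[n] p.1) :=
    hw.comp ((measurable_shift.iterate n).comp measurable_fst)
  have hsample : Integrable (fun p => w (shift^[n] p.1) * fiberSample G z₀ f n p.1) μ₀ :=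
    (integrable_of_abs_le ((measurable_fiberSample hG z₀ hf.measurable n).comp measurable_fst)
      fun p => hf.abs_le _).bdd_mul hwn.aestronglyMeasurable (.of_forall fun p => hw₁ _)
  have hiter : Integrable (fun p => w (shift^[n] p.1) * f ((skew G)^[n] p)) μ₀ :=
    (integrable_of_abs_le (hf.measurable.comp (hG.iterate n)) fun p => hf.abs_le _).bdd_mul
      hwn.aestronglyMeasurable (.of_forall fun p => hw₁ _)
  have hwf : Measurable fun p : SigmaA N A × K => w p.1 * f p :=
    (hw.comp measurable_fst).mul hf.measurable
  rw [← integral_comp_iterate hinv hwf n]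
  simp only [fst_skew_iterate]
  rw [← integral_sub hsample hiter]
  refine abs_integral_le_of_ae_abs_le (.of_forall fun p => ?_)
  rw [← mul_sub, abs_mul, abs_sub_comm]
  exact (mul_le_of_le_one_left (abs_nonneg _) (hw₁ _)).trans
    (hG1.abs_sub_fiberSample_le hα hf.nonneg hf.lip hδ z₀ n p)

variable [BorelSpace K] [CompactSpace K]

lemma integral_sampledDensity_mul [IsProbabilityMeasure m] (hθ : 0 < θ) (hθ' : θ < 1)
    (hG : Measurable (skew G)) (hα : α ≤ 1) (hG1 : CondG1 G α) (hG2 : CondG2 θ G H)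
    (hPF : IsPerronFrobenius m Pσ) (hC₂ : 0 ≤ C₂) (hLY : LasotaYorke θ Pσ C₂)
    (hf : BddLip (sumDist θ) S f) (h₀ : MemABPair m μ₀ 0) (hφ₀ : φ₀ =ᵐ[m] phiPair m μ₀ 0)
    (hB₀ : BddLip (dTheta θ) B₀ φ₀) (hw : Measurable w) (hw₁ : ∀ x, |w x| ≤ 1) (n : ℕ) :
    ∫ x, sampledDensity Pσ G z₀ f φ₀ n x * w x ∂m =
      ∫ p, w (shift^[n] p.1) * fiberSample G z₀ f n p.1 ∂μ₀ := by
  have hlip := hG2.lipWithD_fiberSample_mul hθ hθ' hα hG1 hf hB₀ z₀ n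
  have hmeas : Measurable fun x => w (shift^[n] x) * fiberSample G z₀ f n x :=
    (hw.comp (measurable_shift.iterate n)).mul
      (measurable_fiberSample hG z₀ (hf.lip.measurable_of_sumDist hθ.le hθ') n)
  have hbdd : ∀ x, |w (shift^[n] x) * fiberSample G z₀ f n x| ≤ 1 * S := fun x => by
    rw [abs_mul]
    exact mul_le_mul (hw₁ _) (hf.abs_le _) (abs_nonneg _) zero_le_one
  calc ∫ x, sampledDensity Pσ G z₀ f φ₀ n x * w x ∂m
      = ∫ x, fiberSample G z₀ f n x * φ₀ x * w (shift^[n] x) ∂m :=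
        hPF.integral_iterate_mul (hLY.integrable_iterate hθ hθ' hC₂ ⟨_, hlip⟩) hw hw₁ n
    _ = ∫ x, φ₀ x * (w (shift^[n] x) * fiberSample G z₀ f n x) ∂m := by
        congr with x; ring
    _ = ∫ p, w (shift^[n] p.1) * fiberSample G z₀ f n p.1 ∂μ₀ := by
        rw [h₀.integral_version_mul hφ₀ hmeas hbdd, integral_zero_measure, sub_zero]

lemma eLpNorm_sampledDensity_sub_phiPair_le [IsProbabilityMeasure m] (hθ : 0 < θ) (hθ' : θ < 1)
    (hG : Measurable (skew G)) (hα : 0 ≤ α) (hα' : α ≤ 1) (hG1 : CondG1 G α)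
    (hG2 : CondG2 θ G H) (hδ : ∀ z z' : K, dist z z' ≤ δ) (hPF : IsPerronFrobenius m Pσ)
    (hC₂ : 0 ≤ C₂) (hLY : LasotaYorke θ Pσ C₂) [IsProbabilityMeasure μ₀]
    (hinv : MeasurePreserving (skew G) μ₀ μ₀) (h₀ : MemABPair m μ₀ 0)
    (hφ₀ : φ₀ =ᵐ[m] phiPair m μ₀ 0) (hB₀ : BddLip (dTheta θ) B₀ φ₀)
    (hf : BddLip (sumDist θ) S f) (z₀ : K) {n : ℕ} (hn : 1 ≤ n) :
    eLpNorm (sampledDensity Pσ G z₀ f φ₀ n -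
        phiPair m (posWithDensity μ₀ f) (posWithDensity μ₀ fun p => -f p)) 1 m ≤
      ENNReal.ofReal (S * δ * α ^ n) := by
  set Φ := phiPair m (posWithDensity μ₀ f) (posWithDensity μ₀ fun p => -f p)
  have hfm := hf.lip.measurable_of_sumDist hθ.le hθ'
  have hu := hLY.bddLip_sampledDensity hθ hθ' hα' hG1 hG2 hC₂ hf hB₀ z₀ hn
  have hΦm : Measurable Φ := measurable_phiPair
  have hΦ : Integrable Φ m := (memABPair_posWithDensity h₀.1 hf.abs_le).integrable_phiPair
  have hum := hu.lip.measurable_of_dTheta hθ.le hθ'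
  have hui := hu.integrable (m := m) hθ.le hθ'
  refine eLpNorm_one_le_of_forall_integral_mul_le (hum.sub hΦm) (hui.sub hΦ) fun w hw hw₁ => ?_
  have hmul : ∀ {u : SigmaA N A → ℝ}, Integrable u m → Integrable (fun x => u x * w x) m :=
    fun hu => hu.mul_bdd hw.aestronglyMeasurable (.of_forall hw₁)
  simp only [Pi.sub_apply, sub_mul]
  rw [integral_sub (hmul hui) (hmul hΦ), integral_sampledDensity_mul hθ hθ' hG hα' hG1 hG2 hPF
      hC₂ hLY hf h₀ hφ₀ hB₀ hw hw₁,
    integral_phiPair_posWithDensity_mul h₀.1 hfm hf.abs_le hw hw₁]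
  exact (le_abs_self _).trans (abs_integral_mul_fiberSample_sub_le hG hα hG1 hδ hinv
    ⟨hfm, hf.nonneg, hf.abs_le, hf.lip.fiber⟩ z₀ hw hw₁ n)

variable [Nonempty K]

lemma infNormPair_posWithDensity_lt_top [SigmaFinite m] [IsFiniteMeasure μ] (hac : μ.fst ≪ m)
    (hφ₀ : φ₀ =ᵐ[m] phiPair m μ 0) (hB₀ : ∀ x, φ₀ x ≤ B₀) (hS : ∀ p, |f p| ≤ S) :
    infNormPair m (posWithDensity μ f) (posWithDensity μ fun p => -f p) < ⊤ := by
  obtain ⟨-, -, _, _⟩ := memABPair_posWithDensity hac hS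
  have hfst : ∀ {u : SigmaA N A × K → ℝ}, (∀ p, u p ≤ S) →
      (posWithDensity μ u).fst ≤ (ENNReal.ofReal S * ENNReal.ofReal B₀) • m := fun {u} hu => by
    calc (posWithDensity μ u).fst ≤ (ENNReal.ofReal S • μ).fst :=
          Measure.map_mono (posWithDensity_le_smul hu) measurable_fst
      _ = ENNReal.ofReal S • μ.fst := Measure.map_smul _ _ _
      _ ≤ ENNReal.ofReal S • ENNReal.ofReal B₀ • m := by
          gcongr
          exact fst_le_smul_of_version hac hφ₀ hB₀
      _ = (ENNReal.ofReal S * ENNReal.ofReal B₀) • m := smul_smul _ _ _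
  refine (infNormPair_le_add (hfst fun p => (abs_le'.1 (hS p)).1)
    (hfst fun p => (abs_le'.1 (hS p)).2)).trans_lt ?_
  finiteness

lemma memSPair_posWithDensity [IsProbabilityMeasure m] (hθ : 0 < θ) (hθ' : θ < 1)
    (hG : Measurable (skew G)) (hα : 0 ≤ α) (hα' : α < 1) (hG1 : CondG1 G α)
    (hG2 : CondG2 θ G H) (hPF : IsPerronFrobenius m Pσ)
    (hC₂ : 0 ≤ C₂) (hLY : LasotaYorke θ Pσ C₂) [IsProbabilityMeasure μ₀]
    (hinv : MeasurePreserving (skew G) μ₀ μ₀) (h₀ : MemSPair m θ μ₀ 0)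
    (hf : BddLip (sumDist θ) S f) :
    MemSPair m θ (posWithDensity μ₀ f) (posWithDensity μ₀ fun p => -f p) := by
  obtain ⟨hAB₀, -, φ₀, hφ₀, hLip₀⟩ := h₀
  obtain ⟨B₀, hB₀⟩ := hLip₀.exists_bddLip (dTheta_nonneg hθ.le) (dTheta_le hθ.le hθ')
  refine ⟨memABPair_posWithDensity hAB₀.1 hf.abs_le, infNormPair_posWithDensity_lt_top hAB₀.1 hφ₀
    (fun x => (abs_le'.1 (hB₀.abs_le x)).1) hf.abs_le, ?_⟩
  obtain ⟨z₀⟩ := ‹Nonempty K›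
  have hδ : ∀ z z' : K, dist z z' ≤ Metric.diam univ := fun z z' =>
    Metric.dist_le_diam_of_mem isCompact_univ.isBounded trivial trivial
  have hu := fun n : ℕ =>
    hLY.bddLip_sampledDensity hθ hθ' hα'.le hG1 hG2 hC₂ hf hB₀ z₀ n.succ_pos
  have hlim : Tendsto (fun n : ℕ => ENNReal.ofReal (S * Metric.diam (univ : Set K) * α ^ (n + 1)))
      atTop (𝓝 0) := by
    have hpow := (tendsto_pow_atTop_nhds_zero_of_lt_one hα hα').comp (tendsto_add_atTop_nat 1)
    simpa using ENNReal.tendsto_ofReal (hpow.const_mul (S * Metric.diam (univ : Set K)))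
  obtain ⟨ψ, hψ, hψΦ⟩ := exists_bddLip_ae_eq_of_tendsto_eLpNorm hu
    (fun n => ((hu n).lip.measurable_of_dTheta hθ.le hθ').aestronglyMeasurable)
    measurable_phiPair.aestronglyMeasurable <|
    tendsto_of_tendsto_of_tendsto_of_le_of_le tendsto_const_nhds hlim (fun _ => zero_le)
      fun n => eLpNorm_sampledDensity_sub_phiPair_le hθ hθ' hG hα hα'.le hG1 hG2 hδ hPF hC₂ hLY
        hinv hAB₀ hφ₀ hB₀ hf z₀ n.succ_pos
  exact ⟨ψ, hψΦ, _, hψ.lip⟩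

end Density

section Correlations

variable {N : ℕ} {A : Fin N → Fin N → Bool} {K : Type*} [MetricSpace K] [CompactSpace K]
  [Nonempty K] [MeasurableSpace K] [BorelSpace K] {m : Measure (SigmaA N A)}
  [IsProbabilityMeasure m] {G : SigmaA N A × K → K} {Pσ : (SigmaA N A → ℝ) → SigmaA N A → ℝ}
  {μ₀ : Measure (SigmaA N A × K)} [IsProbabilityMeasure μ₀] {θ α C₂ D H r : ℝ}

theorem exponential_decay_of_correlations_general (hθ : 0 < θ) (hθ' : θ < 1)
    (hG : Measurable (skew G)) (hα : 0 ≤ α) (hα' : α < 1) (hG1 : CondG1 G α)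
    (hG2 : CondG2 θ G H) (hPF : IsPerronFrobenius m Pσ) (hD : 0 ≤ D) (hr : 0 < r) (hr' : r < 1)
    (hgap : HasGap m θ Pσ D r) (hC₂ : 0 ≤ C₂) (hLY : LasotaYorke θ Pσ C₂)
    (hinv : MeasurePreserving (skew G) μ₀ μ₀) (h₀ : MemSPair m θ μ₀ 0) :
    ∃ K₀ ξ : ℝ, 0 < K₀ ∧ 0 < ξ ∧ ξ < 1 ∧
      ∀ (g f : SigmaA N A × K → ℝ) (Lg Sg : ℝ),
        LipWithD (sumDist θ) Lg g → (∀ p, |g p| ≤ Sg) → LipD (sumDist θ) f → ∀ n : ℕ,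
          |(∫ p, g ((skew G)^[n] p) * f p ∂μ₀) - (∫ p, g p ∂μ₀) * ∫ p, f p ∂μ₀| ≤
            (sNormPair m θ (posWithDensity μ₀ f) (posWithDensity μ₀ fun p => -f p)).toReal *
              K₀ * max Lg Sg * ξ ^ n := by
  obtain ⟨K₀, ξ, hK₀, hξ, hξ', hconv⟩ := exists_exponential_convergence_to_equilibrium hθ hθ' hG
    hα hα' hG1 hPF hD hr hr' hgap hinv h₀
  refine ⟨K₀, ξ, hK₀, hξ, hξ', fun g f Lg Sg hLg hSg hf n => ?_⟩
  obtain ⟨S, hS⟩ := hf.exists_bddLip (sumDist_nonneg hθ.le) (sumDist_le hθ.le hθ' fun z z' =>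
    Metric.dist_le_diam_of_mem isCompact_univ.isBounded (mem_univ z) (mem_univ z'))
  have hfm := hS.lip.measurable_of_sumDist hθ.le hθ'
  have hgm := hLg.measurable_of_sumDist hθ.le hθ'
  obtain ⟨p₀⟩ := nonempty_of_isProbabilityMeasure μ₀
  have hg : FiberBddLip (max Lg Sg) g :=
    { measurable := hgm
      nonneg := (abs_nonneg _).trans ((hSg p₀).trans (le_max_right _ _))
      abs_le := fun p => (hSg p).trans (le_max_right _ _)
      lip := fun x => (hLg.fiber x).mono (fun _ _ => dist_nonneg) (le_max_left _ _) }
  have hint := integrable_of_abs_le (μ := μ₀) hfm hS.abs_le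
  have hgf : Integrable (fun p => g ((skew G)^[n] p) * f p) μ₀ :=
    hint.bdd_mul (hgm.comp (hG.iterate n)).aestronglyMeasurable (.of_forall fun p => hSg _)
  have hdecay := hconv _ _ (memSPair_posWithDensity hθ hθ' hG hα hα' hG1 hG2 hPF hC₂ hLY hinv h₀
    hS) _ g hg n
  have hmass : (posWithDensity μ₀ f).real univ - (posWithDensity μ₀ fun p => -f p).real univ =
      ∫ p, f p ∂μ₀ := by
    simpa using integral_posWithDensity_sub (u := fun _ => 1) hfm (by simpa using hint)
  rw [integral_posWithDensity_sub hfm hgf, hmass, mul_comm (∫ p, f p ∂μ₀)] at hdecay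
  exact hdecay.trans_eq (by ring)

end Correlations

/-- **Exponential decay of correlations, existential form.**
Under (G1), (G2) and the spectral gap of `P_σ`, there are `K > 0` and
`ξ ∈ (0,1)` such that for all observables `g, f` Lipschitz with respect to
`d_θ + d`, and all `n ≥ 1`,
`|∫ (g∘F^n) f dμ₀ - ∫ g dμ₀ ∫ f dμ₀| ≤ ‖fμ₀‖_{S^∞} K max{Lip(g),‖g‖_∞} ξ^n`. -/
theorem exponential_decay_of_correlations
    (N : ℕ) (A : Fin N → Fin N → Bool) (hA : Aperiodic A)
    (θ : ℝ) (hθ0 : 0 < θ) (hθ1 : θ < 1)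
    (m : Measure (SigmaA N A)) [IsProbabilityMeasure m]
    (hmM : IsMarkov m) (hminv : m.map shift = m)
    {K : Type*} [MetricSpace K] [CompactSpace K] [Nonempty K]
    [MeasurableSpace K] [BorelSpace K]
    (hdiam : Metric.diam (Set.univ : Set K) = 1)
    (G : SigmaA N A × K → K) (hGm : Measurable (skew G))
    (α : ℝ) (hα0 : 0 < α) (hα1 : α < 1) (hG1 : CondG1 G α)
    (H : ℝ) (hG2 : CondG2 θ G H)
    (Pσ : (SigmaA N A → ℝ) → SigmaA N A → ℝ) (hPF : IsPerronFrobenius m Pσ)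
    (D r : ℝ) (hD : 0 < D) (hr0 : 0 < r) (hr1 : r < 1)
    (hgap : HasGap m θ Pσ D r)
    (C₂ : ℝ) (hC₂ : 0 < C₂)
    (hLY : ∀ φ : SigmaA N A → ℝ, LipD (dTheta θ) φ → ∀ n : ℕ, 1 ≤ n →
      thetaNorm (dTheta θ) (Pσ^[n] φ) ≤
        ENNReal.ofReal (θ ^ n) * thetaNorm (dTheta θ) φ +
          ENNReal.ofReal C₂ * supNormE φ)
    (μ₀ : Measure (SigmaA N A × K)) (hprob : IsProbabilityMeasure μ₀)
    (hinv : μ₀.map (skew G) = μ₀) (hS : MemSPair m θ μ₀ 0)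
    (huniq : ∀ μ' : Measure (SigmaA N A × K),
      IsProbabilityMeasure μ' → μ'.map (skew G) = μ' → MemSPair m θ μ' 0 → μ' = μ₀) :
    ∃ K₀ ξ : ℝ, 0 < K₀ ∧ 0 < ξ ∧ ξ < 1 ∧
      ∀ (g f : SigmaA N A × K → ℝ) (Lg Sg : ℝ),
        (∀ p q, |g p - g q| ≤ Lg * (dTheta θ p.1 q.1 + dist p.2 q.2)) →
        (∀ p, |g p| ≤ Sg) →
        (∃ Lf : ℝ, ∀ p q, |f p - f q| ≤ Lf * (dTheta θ p.1 q.1 + dist p.2 q.2)) →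
        ∀ n : ℕ, 1 ≤ n →
          |(∫ p, g ((skew G)^[n] p) * f p ∂μ₀) -
              (∫ p, g p ∂μ₀) * ∫ p, f p ∂μ₀| ≤
            (sNormPair m θ (μ₀.withDensity fun p => ENNReal.ofReal (f p))
                (μ₀.withDensity fun p => ENNReal.ofReal (-f p))).toReal *
              K₀ * max Lg Sg * ξ ^ n := by
  obtain ⟨K₀, ξ, hK₀, hξ, hξ', hdecay⟩ := exponential_decay_of_correlations_general hθ0 hθ1 hGm
    hα0.le hα1 hG1 hG2 hPF hD.le hr0 hr1 hgap hC₂.le hLY ⟨hGm, hinv⟩ hS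
  exact ⟨K₀, ξ, hK₀, hξ, hξ', fun g f Lg Sg hLg hSg hf n _ => hdecay g f Lg Sg hLg hSg hf n⟩

end RDS
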